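/- arXiv:2409.13574 — 2 statements merged into one kernel-verified Lean document; each statement's English description precedes it below -/
import Mathlib

section
/- Let p, q, s be distinct primes with p ≡ 5 (mod 8), q ≡ 3 (mod 8), s ≡ 3 (mod 4), (p/q) = (p/s) = 1. Then the 2-Sylow subgroup of the ideal class group of ℚ(√p, √q, √s, √2) is cyclic. -/
open NumberField

/-- The multiquadratic field `ℚ(√p, √q, √s, √2)`, realized inside `ℂ`. -/
noncomputable def quadquad (p q s : ℕ) : IntermediateField ℚ ℂ :=
  IntermediateField.adjoin ℚ
    {((Real.sqrt p : ℝ) : ℂ), ((Real.sqrt q : ℝ) : ℂ), ((Real.sqrt s : ℝ) : ℂ),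
     ((Real.sqrt 2 : ℝ) : ℂ)}

namespace QQ
open NumberField IsDedekindDomain
set_option linter.unusedSectionVars false
open scoped nonZeroDivisors

/-- squares in the multiplicative group of a field -/
def sq (K : Type*) [Field K] : Subgroup Kˣ := (powMonoidHom 2 : Kˣ →* Kˣ).range

/-- elements of even valuation at `v` -/
noncomputable def ev {K : Type*} [Field K] [NumberField K] (v : HeightOneSpectrum (𝓞 K)) :
    Subgroup Kˣ :=
  ((powMonoidHom 2 : Multiplicative ℤ →* Multiplicative ℤ).range).comap
    (v.valuationOfNeZero (K := K))

/-- elements of even valuation outside `T` -/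
noncomputable def Sel (K : Type*) [Field K] [NumberField K] (T : Set (HeightOneSpectrum (𝓞 K))) :
    Subgroup Kˣ := ⨅ v : {v : HeightOneSpectrum (𝓞 K) // v ∉ T}, ev v.1

section
variable {K : Type*} [Field K] [NumberField K]

lemma mem_sq {x : Kˣ} : x ∈ sq K ↔ ∃ y : Kˣ, y ^ 2 = x := by
  simp [sq, MonoidHom.mem_range]

lemma mem_ev {v : HeightOneSpectrum (𝓞 K)} {x : Kˣ} :
    x ∈ ev v ↔ IsSquare (v.valuation K (x : K)) := by
  simp only [ev, Subgroup.mem_comap, MonoidHom.mem_range, powMonoidHom_apply]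
  rw [← HeightOneSpectrum.valuationOfNeZero_eq]
  constructor
  · rintro ⟨m, hm⟩
    exact ⟨(m : WithZero (Multiplicative ℤ)), by rw [← hm, pow_two]; rfl⟩
  · rintro ⟨m, hm⟩
    have h0 : m ≠ 0 := by
      rintro rfl
      simp at hm
    refine ⟨WithZero.unzero h0, ?_⟩
    rw [← WithZero.coe_inj, hm, pow_two, WithZero.coe_mul, WithZero.coe_unzero h0]

lemma mem_Sel {T : Set (HeightOneSpectrum (𝓞 K))} {x : Kˣ} :
    x ∈ Sel K T ↔ ∀ v, v ∉ T → IsSquare (v.valuation K (x : K)) := by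
  simp [Sel, Subgroup.mem_iInf, mem_ev]

lemma sq_le_ev (v : HeightOneSpectrum (𝓞 K)) : sq K ≤ ev v := by
  intro x hx
  obtain ⟨y, rfl⟩ := mem_sq.1 hx
  rw [mem_ev]
  exact ⟨v.valuation K (y : K), by simp [pow_two]⟩

lemma sq_le_Sel (T : Set (HeightOneSpectrum (𝓞 K))) : sq K ≤ Sel K T :=
  le_iInf fun v => sq_le_ev v.1

lemma ev_index (v : HeightOneSpectrum (𝓞 K)) : (ev v).index ∣ 2 := by
  rw [ev, Subgroup.index_comap]
  have h2 : (powMonoidHom 2 : Multiplicative ℤ →* Multiplicative ℤ).range.index = 2 := by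
    have : (powMonoidHom 2 : Multiplicative ℤ →* Multiplicative ℤ).range
        = AddSubgroup.toSubgroup (AddSubgroup.zmultiples (2:ℤ)) := by
      ext x
      simp only [MonoidHom.mem_range, powMonoidHom_apply]
      constructor
      · rintro ⟨y, rfl⟩
        exact ⟨y.toAdd, by simp [mul_comm]⟩
      · rintro ⟨y, hy⟩
        refine ⟨Multiplicative.ofAdd y, ?_⟩
        simp only [smul_eq_mul] at hy
        rw [← ofAdd_nsmul]
        simp only [nsmul_eq_mul]
        rw [mul_comm]
        exact hy
    rw [this]
    have := Int.index_zmultiples 2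
    simpa using this
  have h3 := Subgroup.relIndex_dvd_index_of_normal
    (powMonoidHom 2 : Multiplicative ℤ →* Multiplicative ℤ).range
    (v.valuationOfNeZero (K := K)).range
  rwa [h2] at h3

lemma Sel_relIndex (T : Set (HeightOneSpectrum (𝓞 K))) (hT : T.Finite) :
    (Sel K ∅).relIndex (Sel K T) ≠ 0 ∧ (Sel K ∅).relIndex (Sel K T) ≤ 2 ^ T.ncard := by
  have : Fintype T := hT.fintype
  have h1 : Sel K ∅ = (⨅ v : T, ev v.1) ⊓ Sel K T := by
    ext x
    simp only [Subgroup.mem_inf, mem_Sel, Subgroup.mem_iInf, mem_ev]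
    constructor
    · intro h
      exact ⟨fun v => h _ (by simp), fun v _ => h _ (by simp)⟩
    · rintro ⟨h1, h2⟩ v -
      by_cases hv : v ∈ T
      · exact h1 ⟨v, hv⟩
      · exact h2 v hv
  rw [h1, Subgroup.inf_relIndex_right]
  have hne : ∀ v : HeightOneSpectrum (𝓞 K), (ev v).relIndex (Sel K T) ≠ 0 := fun v h => by
    have := (Subgroup.relIndex_dvd_index_of_normal (ev v) (Sel K T)).trans (ev_index v)
    rw [h] at this
    simp at this
  refine ⟨Subgroup.relIndex_iInf_ne_zero fun i => hne _, ?_⟩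
  refine (Subgroup.relIndex_iInf_le _).trans ?_
  refine (Finset.prod_le_pow_card _ _ 2 ?_).trans ?_
  · intro i _
    exact Nat.le_of_dvd (by norm_num)
      ((Subgroup.relIndex_dvd_index_of_normal (ev i.1) (Sel K T)).trans (ev_index i.1))
  · rw [Set.ncard_eq_toFinset_card' T]
    simp

/-- the unit of `K` attached to a nonzero integer -/
noncomputable def toU (x : 𝓞 K) (hx : x ≠ 0) : Kˣ :=
  Units.mk0 (algebraMap (𝓞 K) K x) (by simpa using hx)

lemma mem_Sel_int {x : 𝓞 K} (hx : x ≠ 0) :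
    toU x hx ∈ Sel K ∅ ↔ ∃ I : Ideal (𝓞 K), Ideal.span {x} = I ^ 2 := by
  classical
  have hI0 : (Ideal.span {x} : Ideal (𝓞 K)) ≠ 0 := by simpa using hx
  have key : ∀ v : HeightOneSpectrum (𝓞 K), IsSquare (v.valuation K (toU x hx : K)) ↔
      Even ((Associates.mk v.asIdeal).count (Associates.mk (Ideal.span {x})).factors) := by
    intro v
    have : v.valuation K (toU x hx : K) = v.intValuation x := by
      simp [toU, HeightOneSpectrum.valuation_of_algebraMap]
    rw [this, v.intValuation_if_neg hx]
    constructor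
    · rintro ⟨m, hm⟩
      have h0 : m ≠ 0 := by rintro rfl; simp at hm
      have h1 := congrArg WithZero.log hm
      rw [WithZero.log_mul h0 h0] at h1
      simp only [WithZero.log_exp] at h1
      have : Even (-((Associates.mk v.asIdeal).count (Associates.mk (Ideal.span {x})).factors : ℤ)) :=
        ⟨_, h1⟩
      simpa using this
    · rintro ⟨k, hk⟩
      exact ⟨WithZero.exp (-(k : ℤ)), by rw [hk, ← WithZero.exp_add]; push_cast; ring_nf⟩
  rw [mem_Sel]
  constructor
  · intro h
    have h' := fun v => (key v).1 (h v (by simp))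
    refine ⟨∏ᶠ v : HeightOneSpectrum (𝓞 K), v.asIdeal ^
      ((Associates.mk v.asIdeal).count (Associates.mk (Ideal.span {x})).factors / 2), ?_⟩
    have hfin := Ideal.hasFiniteMulSupport hI0
    rw [finprod_pow]
    · rw [← Ideal.finprod_heightOneSpectrum_factorization hI0]
      refine finprod_congr fun v => ?_
      rw [Ideal.finprod_heightOneSpectrum_factorization hI0, HeightOneSpectrum.maxPowDividing,
        ← pow_mul, Nat.div_mul_cancel (h' v).two_dvd]
    · refine Set.Finite.subset (Associates.finite_factors hI0) ?_
      intro v hv hz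
      apply hv
      have hz' : (Associates.mk v.asIdeal).count (Associates.mk (Ideal.span {x})).factors = 0 := by
        exact_mod_cast hz
      simp [hz']
  · rintro ⟨I, hI⟩ v -
    rw [key, hI, Associates.mk_pow]
    have hI1 : I ≠ 0 := by rintro rfl; simp [hx] at hI
    rw [Associates.count_pow (Associates.mk_ne_zero.2 hI1)
      (Associates.irreducible_mk.2 v.irreducible)]
    simp

lemma exists_int_rep (x : Kˣ) : ∃ (a : 𝓞 K) (ha : a ≠ 0) (y : Kˣ), x = toU a ha * y ^ 2 := by
  obtain ⟨a, b, hb, h⟩ := IsFractionRing.div_surjective (A := 𝓞 K) (x : K)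
  have hb0 : b ≠ 0 := nonZeroDivisors.ne_zero hb
  have ha0 : a ≠ 0 := by
    rintro rfl
    simp at h
    exact x.ne_zero h.symm
  refine ⟨a * b, mul_ne_zero ha0 hb0, (toU b hb0)⁻¹, ?_⟩
  ext
  have : (algebraMap (𝓞 K) K b) ≠ 0 := by simpa using hb0
  simp [toU, ← h]
  field_simp

/-- image of units -/
noncomputable def UU (K : Type*) [Field K] [NumberField K] : Subgroup Kˣ :=
  (Units.map (algebraMap (𝓞 K) K : 𝓞 K →* K)).range

lemma UU_le_Sel : UU K ≤ Sel K ∅ := by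
  rintro _ ⟨u, rfl⟩
  rw [mem_Sel]
  intro v _
  have := v.valuation_of_unit_eq (K := K) u
  rw [← HeightOneSpectrum.valuationOfNeZero_eq, this]
  exact ⟨1, by simp⟩

/-- no 2-torsion in class group -/
def OddCl (K : Type*) [Field K] [NumberField K] : Prop :=
  ∀ c : ClassGroup (𝓞 K), c ^ 2 = 1 → c = 1

lemma Sel_eq_of_odd (h : OddCl K) : Sel K ∅ = UU K ⊔ sq K := by
  apply le_antisymm
  · intro x hx
    obtain ⟨a, ha, y, rfl⟩ := exists_int_rep x
    have hy : y ^ 2 ∈ sq K := mem_sq.2 ⟨y, rfl⟩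
    have ha' : toU a ha ∈ Sel K ∅ := (Subgroup.mul_mem_cancel_right _ (sq_le_Sel _ hy)).1 hx
    refine mul_mem ?_ (Subgroup.mem_sup_right hy)
    obtain ⟨I, hI⟩ := (mem_Sel_int ha).1 ha'
    have hI1 : I ≠ 0 := by rintro rfl; simp [ha] at hI
    have hI2 : I ∈ (Ideal (𝓞 K))⁰ := mem_nonZeroDivisors_of_ne_zero hI1
    have h1 : ClassGroup.mk0 ⟨I, hI2⟩ = 1 := by
      apply h
      rw [← map_pow, ClassGroup.mk0_eq_one_iff]
      exact ⟨⟨a, by simp [← hI]⟩⟩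
    rw [ClassGroup.mk0_eq_one_iff] at h1
    obtain ⟨⟨b, hb⟩⟩ := h1
    simp only [Ideal.submodule_span_eq] at hb
    have hb0 : b ≠ 0 := by
      rintro rfl
      simp at hb
      exact hI1 hb
    rw [hb, Ideal.span_singleton_pow, Ideal.span_singleton_eq_span_singleton] at hI
    obtain ⟨u, hu⟩ := hI.symm
    have : toU a ha = Units.map (algebraMap (𝓞 K) K : 𝓞 K →* K) u * (toU b hb0) ^ 2 := by
      ext
      simp [toU, ← hu]
      ring
    rw [this]
    exact mul_mem (Subgroup.mem_sup_left ⟨u, rfl⟩) (Subgroup.mem_sup_right (mem_sq.2 ⟨_, rfl⟩))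
  · exact sup_le UU_le_Sel (sq_le_Sel _)

/-- `#Cl[2]` is at most the index of units in the Selmer group -/
lemma card_le (hfin : (UU K ⊔ sq K).relIndex (Sel K ∅) ≠ 0) :
    Nat.card {c : ClassGroup (𝓞 K) // c ^ 2 = 1} ≤ (UU K ⊔ sq K).relIndex (Sel K ∅) := by
  classical
  have hex : ∀ c : {c : ClassGroup (𝓞 K) // c ^ 2 = 1}, ∃ (I : (Ideal (𝓞 K))⁰) (a : 𝓞 K)
      (_ : a ≠ 0), ClassGroup.mk0 I = c ∧ Ideal.span {a} = (I : Ideal (𝓞 K)) ^ 2 := by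
    rintro ⟨c, hc⟩
    obtain ⟨I, rfl⟩ := ClassGroup.mk0_surjective c
    rw [← map_pow, ClassGroup.mk0_eq_one_iff] at hc
    obtain ⟨⟨a, ha⟩⟩ := hc
    simp only [Ideal.submodule_span_eq] at ha
    refine ⟨I, a, ?_, rfl, by simpa using ha.symm⟩
    rintro rfl
    have := nonZeroDivisors.ne_zero I.2
    simp at ha
    rw [← Ideal.zero_eq_bot] at ha
    exact this ((pow_eq_zero_iff two_ne_zero).1 ha)
  choose I a ha hI hIa using hex
  have hS : ∀ c, toU (a c) (ha c) ∈ Sel K ∅ := fun c => (mem_Sel_int _).2 ⟨_, hIa c⟩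
  let f : {c : ClassGroup (𝓞 K) // c ^ 2 = 1} →
      (Sel K ∅) ⧸ ((UU K ⊔ sq K).subgroupOf (Sel K ∅)) :=
    fun c => QuotientGroup.mk ⟨toU (a c) (ha c), hS c⟩
  have hf : Function.Injective f := by
    intro c c' h
    simp only [f] at h
    rw [QuotientGroup.eq, Subgroup.mem_subgroupOf] at h
    simp only [Subgroup.coe_mul, InvMemClass.coe_inv] at h
    rw [Subgroup.mem_sup] at h
    obtain ⟨_, ⟨u, rfl⟩, z, hz, h⟩ := h
    obtain ⟨z, rfl⟩ := mem_sq.1 hz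
    obtain ⟨n, d, hd, hnd⟩ := IsFractionRing.div_surjective (A := 𝓞 K) (z : K)
    have hd0 : d ≠ 0 := nonZeroDivisors.ne_zero hd
    have hn0 : n ≠ 0 := by
      rintro rfl
      simp at hnd
      exact z.ne_zero hnd.symm
    have h2 : a c' * d ^ 2 = u * (a c * n ^ 2) := by
      apply FaithfulSMul.algebraMap_injective (𝓞 K) K
      have h3 := congrArg (Units.val) h
      have hd1 : (algebraMap (𝓞 K) K d) ≠ 0 := by simpa using hd0
      have ha1 : (algebraMap (𝓞 K) K (a c)) ≠ 0 := by simpa using ha c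
      simp [toU, ← hnd] at h3
      field_simp at h3
      simp only [map_mul, map_pow]
      linear_combination -h3
    have h4 : ((I c' : Ideal (𝓞 K)) * Ideal.span {d}) ^ 2 = ((I c : Ideal (𝓞 K)) * Ideal.span {n}) ^ 2 := by
      rw [mul_pow, mul_pow, ← hIa, ← hIa, Ideal.span_singleton_pow, Ideal.span_singleton_pow,
        Ideal.span_singleton_mul_span_singleton, Ideal.span_singleton_mul_span_singleton, h2,
        Ideal.span_singleton_mul_left_unit u.isUnit]
    have h5 : (I c' : Ideal (𝓞 K)) * Ideal.span {d} = (I c : Ideal (𝓞 K)) * Ideal.span {n} :=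
      dvd_antisymm ((UniqueFactorizationMonoid.pow_dvd_pow_iff_dvd two_ne_zero).1 h4.dvd)
        ((UniqueFactorizationMonoid.pow_dvd_pow_iff_dvd two_ne_zero).1 h4.symm.dvd)
    have : ClassGroup.mk0 (I c') = ClassGroup.mk0 (I c) := by
      rw [ClassGroup.mk0_eq_mk0_iff]
      exact ⟨d, n, hd0, hn0, by rw [mul_comm, h5, mul_comm]⟩
    rw [hI, hI] at this
    exact Subtype.ext this.symm
  have : Finite ((Sel K ∅) ⧸ ((UU K ⊔ sq K).subgroupOf (Sel K ∅))) :=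
    Nat.finite_of_card_ne_zero hfin
  exact Nat.card_le_card_of_injective f hf

end
end QQ

namespace QQ
open NumberField IsDedekindDomain
set_option linter.unusedSectionVars false
open scoped nonZeroDivisors

section
variable {K : Type*} [Field K] [NumberField K]

/-- exponents of a unit -/
noncomputable def exps (x : (𝓞 K)ˣ) : Fin (Units.rank K) → ℤ :=
  (Units.exist_unique_eq_mul_prod K x).choose.2

lemma exps_spec (x : (𝓞 K)ˣ) : ∃ z ∈ Units.torsion K,
    x = z * ∏ i, (Units.fundSystem K i) ^ (exps x i) :=
  ⟨_, (Units.exist_unique_eq_mul_prod K x).choose.1.2,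
    (Units.exist_unique_eq_mul_prod K x).choose_spec.1⟩

lemma exps_eq {x z : (𝓞 K)ˣ} (hz : z ∈ Units.torsion K) {f : Fin (Units.rank K) → ℤ}
    (h : x = z * ∏ i, (Units.fundSystem K i) ^ (f i)) : exps x = f := by
  have := (Units.exist_unique_eq_mul_prod K x).choose_spec.2 (⟨z, hz⟩, f) h
  exact (congrArg Prod.snd this).symm

/-- parity of the exponents of a unit -/
noncomputable def par (K : Type*) [Field K] [NumberField K] :
    (𝓞 K)ˣ →* Multiplicative (Fin (Units.rank K) → ZMod 2) where
  toFun x := Multiplicative.ofAdd (fun i => ((exps x i : ℤ) : ZMod 2))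
  map_one' := by
    have : exps (1 : (𝓞 K)ˣ) = 0 := exps_eq (one_mem _) (by simp)
    rw [this, ← ofAdd_zero]; congr 1
  map_mul' x y := by
    obtain ⟨z, hz, hx⟩ := exps_spec x
    obtain ⟨w, hw, hy⟩ := exps_spec y
    have : exps (x * y) = exps x + exps y := by
      apply exps_eq (mul_mem hz hw)
      simp only [Pi.add_apply, zpow_add, Finset.prod_mul_distrib]
      conv_lhs => rw [hx, hy]
      exact mul_mul_mul_comm _ _ _ _
    rw [this, ← ofAdd_add]
    congr 1; ext i; simp

lemma par_apply (x : (𝓞 K)ˣ) :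
    par K x = Multiplicative.ofAdd (fun i => ((exps x i : ℤ) : ZMod 2)) := rfl

lemma par_surj : Function.Surjective (par K) := by
  intro c
  refine ⟨∏ i, (Units.fundSystem K i) ^ (((Multiplicative.toAdd c i).val : ℤ)), ?_⟩
  rw [par_apply, exps_eq (one_mem _) (one_mul _).symm, ← ofAdd_toAdd c]
  congr 1; ext i
  simp

lemma par_ker {x : (𝓞 K)ˣ} (hx : x ∈ (par K).ker) :
    ∃ y : (𝓞 K)ˣ, ∃ z ∈ Units.torsion K, x = y ^ 2 * z := by
  rw [MonoidHom.mem_ker] at hx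
  have h1 : ∀ i, (2:ℤ) ∣ exps x i := by
    intro i
    have := congrFun (congrArg Multiplicative.toAdd hx) i
    exact (ZMod.intCast_zmod_eq_zero_iff_dvd _ 2).1 this
  choose f hf using h1
  obtain ⟨z, hz, hx⟩ := exps_spec x
  refine ⟨∏ i, (Units.fundSystem K i) ^ (f i), z, hz, ?_⟩
  rw [mul_comm, ← Finset.prod_pow]
  conv_lhs => rw [hx]
  congr 1
  apply Finset.prod_congr rfl
  intro i _
  rw [hf i, ← zpow_natCast, ← zpow_mul, mul_comm]
  rfl

lemma torsion_pm [IsTotallyReal K] {x : (𝓞 K)ˣ} (hx : x ∈ Units.torsion K) : x = 1 ∨ x = -1 := by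
  have hpos : 0 < InfinitePlace.nrRealPlaces K := by
    rw [← IsTotallyReal.finrank]; exact Module.finrank_pos
  by_cases! hc : 2 < orderOf x
  · have e : orderOf x = orderOf (x : K) := by
      rw [← orderOf_units]
      exact (orderOf_injective (algebraMap (𝓞 K) K : 𝓞 K →* K)
        (RingOfIntegers.coe_injective) (x : 𝓞 K)).symm
    rw [e] at hc
    linarith [NumberField.InfinitePlace.IsPrimitiveRoot.nrRealPlaces_eq_zero_of_two_lt hc (IsPrimitiveRoot.orderOf (x : K))]
  · have h0 : 0 < orderOf x := orderOf_pos_iff.2 ((CommGroup.mem_torsion x).1 hx)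
    have h2 : x ^ 2 = 1 := by
      rcases (show orderOf x = 1 ∨ orderOf x = 2 by omega) with h | h
      · rw [orderOf_eq_one_iff.1 h, one_pow]
      · rw [← h, pow_orderOf_eq_one]
    have h3 : (x : 𝓞 K)^2 = 1 := by rw [← Units.val_pow_eq_pow_val, h2]; rfl
    rcases sq_eq_one_iff.1 h3 with h | h
    · left; ext; simpa using congrArg (algebraMap (𝓞 K) K) h
    · right; ext; simpa using congrArg (algebraMap (𝓞 K) K) h

lemma neg_one_not_sq [IsTotallyReal K] (y : K) : y ^ 2 ≠ -1 := by
  intro h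
  let v : InfinitePlace K := Classical.arbitrary _
  have hv : v.IsReal := IsTotallyReal.isReal v
  have := congrArg (InfinitePlace.embedding_of_isReal hv) h
  simp only [map_pow, map_neg, map_one] at this
  nlinarith [sq_nonneg (InfinitePlace.embedding_of_isReal hv y)]

lemma sqE_index [IsTotallyReal K] :
    ((powMonoidHom 2 : (𝓞 K)ˣ →* (𝓞 K)ˣ).range).index = 2 ^ Module.finrank ℚ K := by
  have hle : (powMonoidHom 2 : (𝓞 K)ˣ →* (𝓞 K)ˣ).range ≤ (par K).ker := by
    rintro _ ⟨y, rfl⟩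
    rw [MonoidHom.mem_ker, powMonoidHom_apply, map_pow]
    apply Multiplicative.toAdd.injective
    ext i
    rw [toAdd_pow, toAdd_one, Pi.smul_apply, Pi.zero_apply, two_nsmul]
    exact CharTwo.add_self_eq_zero _
  rw [← Subgroup.relIndex_mul_index hle, Subgroup.index_ker, MonoidHom.range_eq_top.2 par_surj]
  have h2 : ((powMonoidHom 2 : (𝓞 K)ˣ →* (𝓞 K)ˣ).range).relIndex (par K).ker = 2 := by
    rw [Subgroup.relIndex_eq_two_iff_exists_notMem_and]
    refine ⟨-1, ?_, ?_, ?_⟩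
    · have e : exps (-1 : (𝓞 K)ˣ) = 0 := by
        refine exps_eq (z := -1) ?_ (by simp)
        exact (CommGroup.mem_torsion (-1 : (𝓞 K)ˣ)).2
          (isOfFinOrder_iff_pow_eq_one.2 ⟨2, by norm_num, by simp⟩)
      rw [MonoidHom.mem_ker, par_apply, e, ← ofAdd_zero]
      congr 1
    · rintro ⟨y, hy⟩
      apply neg_one_not_sq (y : K)
      have := congrArg (fun u : (𝓞 K)ˣ => (u : K)) hy
      simpa using this
    · intro b hb
      obtain ⟨y, z, hz, rfl⟩ := par_ker hb
      rcases torsion_pm hz with rfl | rfl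
      · right; exact ⟨y, by simp⟩
      · left; exact ⟨y, by simp⟩
  rw [h2]
  have : 0 < Module.finrank ℚ K := Module.finrank_pos
  have h3 : Units.rank K + 1 = Module.finrank ℚ K := by
    have := InfinitePlace.card_eq_nrRealPlaces_add_nrComplexPlaces (K := K)
    rw [IsTotallyReal.nrComplexPlaces_eq_zero, ← IsTotallyReal.finrank] at this
    rw [Units.rank, this]; omega
  rw [← h3, pow_succ, mul_comm]
  congr 1
  simp

/-- the inclusion of units -/
noncomputable abbrev uu (K : Type*) [Field K] [NumberField K] : (𝓞 K)ˣ →* Kˣ :=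
  Units.map (algebraMap (𝓞 K) K : 𝓞 K →* K)

lemma uu_inj : Function.Injective (uu K) :=
  Units.map_injective RingOfIntegers.coe_injective

lemma sq_comap_uu : (sq K).comap (uu K) = (powMonoidHom 2 : (𝓞 K)ˣ →* (𝓞 K)ˣ).range := by
  ext x
  rw [Subgroup.mem_comap, mem_sq]
  constructor
  · rintro ⟨y, hy⟩
    have key : ∀ y : Kˣ, ∀ x : (𝓞 K)ˣ, y^2 = uu K x → ∃ a : 𝓞 K, algebraMap (𝓞 K) K a = y := by
      intro y x hy
      apply IsIntegrallyClosed.algebraMap_eq_of_integral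
      apply IsIntegral.of_pow (n := 2) (by norm_num)
      have : (y : K)^2 = algebraMap (𝓞 K) K x := by
        rw [← Units.val_pow_eq_pow_val, hy]; rfl
      rw [this]
      exact isIntegral_algebraMap
    obtain ⟨a, ha⟩ := key y x hy
    obtain ⟨b, hb⟩ := key y⁻¹ x⁻¹ (by rw [inv_pow, hy, map_inv])
    have hab : a * b = 1 := by
      apply RingOfIntegers.coe_injective
      rw [map_mul, ha, hb]; simp
    refine ⟨⟨a, b, hab, by rw [mul_comm, hab]⟩, ?_⟩
    apply uu_inj
    rw [powMonoidHom_apply, map_pow, ← hy]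
    congr 1
    ext
    simpa using ha
  · rintro ⟨y, rfl⟩
    exact ⟨uu K y, by simp⟩

lemma unit_relIndex [IsTotallyReal K] :
    (sq K).relIndex (UU K ⊔ sq K) = 2 ^ Module.finrank ℚ K := by
  rw [Subgroup.relIndex_sup_right, UU, ← Subgroup.index_comap, sq_comap_uu, sqE_index]

end
end QQ

namespace QQ
open NumberField IsDedekindDomain
set_option linter.unusedSectionVars false
open scoped nonZeroDivisors

section
variable {F K : Type*} [Field F] [NumberField F] [Field K] [NumberField K] [Algebra F K]

lemma ram_one [IsGalois F K] (p : Ideal (𝓞 F)) [p.IsPrime] (hp : p ≠ ⊥) (P : Ideal (𝓞 K)) [P.IsPrime]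
    [P.LiesOver p] (h : ∀ g : Gal(K/F), (∀ x : 𝓞 K, g • x - x ∈ P) → g = 1) :
    p.ramificationIdx' P = 1 := by
  rw [Ideal.ramificationIdx'_eq_ramificationIdx p P hp,
    ← Ideal.ramificationIdxIn_eq_ramificationIdx p P Gal(K/F),
    ← Ideal.card_inertia_eq_ramificationIdxIn (G := Gal(K/F)) p P]
  have : P.inertia Gal(K/F) = ⊥ := by
    rw [eq_bot_iff]
    intro g hg
    exact h g hg
  rw [this]; simp

lemma ram_one_Z [IsGalois ℚ K] (p : Ideal ℤ) [p.IsPrime] (hp : p ≠ ⊥) (P : Ideal (𝓞 K)) [P.IsPrime]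
    [P.LiesOver p] (h : ∀ g : Gal(K/ℚ), (∀ x : 𝓞 K, g • x - x ∈ P) → g = 1) :
    p.ramificationIdx' P = 1 := by
  rw [Ideal.ramificationIdx'_eq_ramificationIdx p P hp,
    ← Ideal.ramificationIdxIn_eq_ramificationIdx p P Gal(K/ℚ),
    ← Ideal.card_inertia_eq_ramificationIdxIn (G := Gal(K/ℚ)) p P]
  have : P.inertia Gal(K/ℚ) = ⊥ := by
    rw [eq_bot_iff]
    intro g hg
    exact h g hg
  rw [this]; simp

/-- the inclusion of multiplicative groups -/
abbrev jj (F K : Type*) [Field F] [Field K] [Algebra F K] : Fˣ →* Kˣ :=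
  Units.map (algebraMap F K : F →* K)

lemma descend [IsGalois F K] (v : HeightOneSpectrum (𝓞 F)) (f : Fˣ)
    (hf : jj F K f ∈ Sel K ∅)
    (h : ∀ g : Gal(K/F), g ≠ 1 → ∃ θ : 𝓞 K, ∃ m : 𝓞 F, m ∉ v.asIdeal ∧
      (g • θ - θ) ^ 2 = algebraMap (𝓞 F) (𝓞 K) m) :
    IsSquare (v.valuation F (f : F)) := by
  obtain ⟨P, hP⟩ : ∃ P : Ideal (𝓞 K), P.IsPrime ∧ P.LiesOver v.asIdeal := by
    obtain ⟨⟨P, h1, h2⟩⟩ := (inferInstance : Nonempty (v.asIdeal.primesOver (𝓞 K)))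
    exact ⟨P, h1, h2⟩
  obtain ⟨h1, h2⟩ := hP
  have hP0 : P ≠ ⊥ := Ideal.ne_bot_of_liesOver_of_ne_bot v.ne_bot P
  let w : HeightOneSpectrum (𝓞 K) := ⟨P, h1, hP0⟩
  have : w.asIdeal.LiesOver v.asIdeal := h2
  have e := HeightOneSpectrum.valuation_liesOver K v w (f : F)
  rw [ram_one v.asIdeal v.ne_bot w.asIdeal, pow_one] at e
  · rw [e]
    exact (mem_Sel.1 hf) w (by simp)
  · intro g hg
    by_contra hne
    obtain ⟨θ, m, hm, hθ⟩ := h g hne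
    apply hm
    rw [h2.over, Ideal.mem_comap, ← hθ]
    exact Ideal.pow_mem_of_mem _ (hg θ) 2 (by norm_num)

/-- the norm on multiplicative groups -/
noncomputable abbrev nn (F K : Type*) [Field F] [Field K] [Algebra F K] : Kˣ →* Fˣ :=
  Units.map (Algebra.norm F : K →* F)

lemma norm_Sel {x : Kˣ} (hx : x ∈ Sel K ∅) : nn F K x ∈ Sel F ∅ := by
  obtain ⟨a, ha, y, rfl⟩ := exists_int_rep x
  have h1 : toU a ha ∈ Sel K ∅ := by
    have : y^2 ∈ Sel K ∅ := sq_le_Sel _ (mem_sq.2 ⟨y, rfl⟩)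
    exact (Subgroup.mul_mem_cancel_right _ this).1 hx
  obtain ⟨I, hI⟩ := (mem_Sel_int ha).1 h1
  rw [map_mul, map_pow]
  apply mul_mem _ (sq_le_Sel _ (mem_sq.2 ⟨_, rfl⟩))
  have hb : Algebra.intNorm (𝓞 F) (𝓞 K) a ≠ 0 := by
    rw [Algebra.intNorm_ne_zero]; exact ha
  have : nn F K (toU a ha) = toU (Algebra.intNorm (𝓞 F) (𝓞 K) a) hb := by
    ext
    simp only [toU, Units.coe_map, Units.val_mk0]
    exact (Algebra.algebraMap_intNorm (A := 𝓞 F) (K := F) (L := K) (B := 𝓞 K) a).symm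
  rw [this, mem_Sel_int hb]
  refine ⟨Ideal.relNorm (𝓞 F) I, ?_⟩
  rw [← map_pow, ← hI, Ideal.relNorm_singleton]

/-- units which are norms from the Selmer group, up to squares -/
noncomputable def HH (F K : Type*) [Field F] [NumberField F] [Field K] [NumberField K] [Algebra F K] :
    Subgroup (𝓞 F)ˣ := ((Sel K ∅).map (nn F K) ⊔ sq F).comap (uu F)

lemma gal_two (h2 : Module.finrank F K = 2) [IsGalois F K] {σ : Gal(K/F)} (hσ : σ ≠ 1) (g : Gal(K/F)) :
    g = 1 ∨ g = σ := by
  have hc : Nat.card Gal(K/F) = 2 := by rw [IsGalois.card_aut_eq_finrank, h2]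
  obtain ⟨x, hx⟩ := (Nat.card_eq_two_iff' (1 : Gal(K/F))).1 hc
  by_cases hg : g = 1
  · exact Or.inl hg
  · right
    rw [hx.2 g hg, hx.2 σ hσ]

lemma norm_eq (h2 : Module.finrank F K = 2) [IsGalois F K] {σ : Gal(K/F)} (hσ : σ ≠ 1) (x : K) :
    algebraMap F K (Algebra.norm F x) = x * σ x := by
  classical
  rw [Algebra.norm_eq_prod_automorphisms]
  have : (Finset.univ : Finset Gal(K/F)) = {1, σ} := by
    ext g; simpa using gal_two h2 hσ g
  rw [this, Finset.prod_pair hσ.symm]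
  rfl

lemma hilb (h2 : Module.finrank F K = 2) [IsGalois F K] {σ : Gal(K/F)} {δ : K}
    (hδ : δ ≠ 0) (hσ : σ δ = -δ) {x : Kˣ} {y : Fˣ} (h : nn F K x = y ^ 2) :
    ∃ f : Fˣ, ∃ w : Kˣ, x = jj F K f * w ^ 2 := by
  have hσ1 : σ ≠ 1 := by
    rintro rfl
    have : δ = -δ := hσ
    exact hδ (self_eq_neg.1 this)
  have hN : (x : K) * σ x = (algebraMap F K y) ^ 2 := by
    rw [← norm_eq h2 hσ1, ← map_pow]
    congr 1
    have := congrArg Units.val h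
    simpa using this
  have hy : algebraMap F K (y : F) ≠ 0 := by simp
  have hx : (x : K) ≠ 0 := x.ne_zero
  have key : ∃ w : K, w ≠ 0 ∧ (x : K) * σ w = algebraMap F K y * w := by
    by_cases hz : (algebraMap F K (y : F)) + x = 0
    · refine ⟨δ, hδ, ?_⟩
      rw [hσ, eq_neg_of_add_eq_zero_left hz]; ring
    · refine ⟨algebraMap F K y + x, hz, ?_⟩
      rw [map_add, AlgEquiv.commutes, mul_add, hN]; ring
  obtain ⟨w, hw, e⟩ := key
  have hNw : Algebra.norm F w ≠ 0 := Algebra.norm_ne_zero_iff.2 hw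
  refine ⟨y * (Units.mk0 _ hNw)⁻¹, Units.mk0 w hw, ?_⟩
  have hσw : σ w ≠ 0 := by simpa using hw
  ext
  simp only [Units.coe_map, Units.val_mul, Units.val_inv_eq_inv_val, Units.val_mk0,
    MonoidHom.coe_coe, map_mul, map_inv₀, Units.val_pow_eq_pow_val]
  rw [norm_eq h2 hσ1]
  field_simp
  exact e

theorem step [IsTotallyReal F] [IsTotallyReal K] (h2 : Module.finrank F K = 2) (σ : Gal(K/F)) (δ : K)
    (d : F) (hδ : δ ^ 2 = algebraMap F K d) (hd : ∀ y : F, y ^ 2 ≠ d) (hσ : σ δ = -δ)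
    (hF : OddCl F) (T : Set (HeightOneSpectrum (𝓞 F))) (hT : T.Finite)
    (hun : ∀ v, v ∉ T → ∃ θ : 𝓞 K, ∃ m : 𝓞 F, m ∉ v.asIdeal ∧
      (σ • θ - θ) ^ 2 = algebraMap (𝓞 F) (𝓞 K) m) :
    (HH F K).index ≠ 0 ∧
    2 * (HH F K).index * Nat.card {c : ClassGroup (𝓞 K) // c ^ 2 = 1} ≤ 2 ^ T.ncard := by
  have : Algebra.IsQuadraticExtension F K := ⟨h2⟩
  have : IsGalois F K := inferInstance
  have hδ0 : δ ≠ 0 := by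
    rintro rfl
    apply hd 0
    apply (algebraMap F K).injective
    rw [← hδ]; simp
  have hσ1 : σ ≠ 1 := by
    rintro rfl
    have : δ = -δ := hσ
    exact hδ0 (self_eq_neg.1 this)
  have hd0 : d ≠ 0 := fun h => hd 0 (by rw [h]; simp)
  set n := Module.finrank ℚ F with hn
  have hn2 : Module.finrank ℚ K = n + n := by
    rw [← Module.finrank_mul_finrank ℚ F K, h2]; ring
  have desc : ∀ f : Fˣ, jj F K f ∈ Sel K ∅ → f ∈ Sel F T := by
    intro f hf
    rw [mem_Sel]
    intro v hv
    apply descend v f hf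
    intro g hg
    rcases gal_two h2 hσ1 g with rfl | rfl
    · exact absurd rfl hg
    · exact hun v hv
  set A := sq K
  set B := sq F
  set G := Sel K ∅
  set f := nn F K
  set j := jj F K
  set M := G ⊓ B.comap f with hM
  have hAM : A ≤ M := by
    apply le_inf (sq_le_Sel _)
    rintro x hx
    obtain ⟨y, rfl⟩ := mem_sq.1 hx
    exact mem_sq.2 ⟨f y, by simp⟩
  have hMG : M ≤ G := inf_le_left
  have e1 : A.relIndex M * B.relIndex (G.map f) = A.relIndex G := by
    rw [← Subgroup.relIndex_mul_relIndex A M G hAM hMG, ← Subgroup.relIndex_comap, hM,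
      Subgroup.inf_relIndex_left]
  -- norms
  have hSel : Sel F ∅ = UU F ⊔ B := Sel_eq_of_odd hF
  have hfG : G.map f ≤ UU F ⊔ B := by
    rw [← hSel]
    rintro _ ⟨x, hx, rfl⟩
    exact norm_Sel hx
  have e2 : B.relIndex (G.map f) * (HH F K).index = 2 ^ n := by
    have h1 : (HH F K).index = (G.map f ⊔ B).relIndex (UU F ⊔ B) := by
      have : UU F ⊔ B = UU F ⊔ (G.map f ⊔ B) := by
        apply le_antisymm
        · exact sup_le_sup_left le_sup_right _
        · exact sup_le le_sup_left (sup_le hfG le_sup_right)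
      rw [this, Subgroup.relIndex_sup_right, HH, Subgroup.index_comap]
      rfl
    rw [h1, ← Subgroup.relIndex_sup_right (H := G.map f) (K := B),
      Subgroup.relIndex_mul_relIndex B _ _ le_sup_right (sup_le hfG le_sup_right), unit_relIndex]
  -- bound on M
  set S := Sel F T
  have hMle : M ≤ S.map j ⊔ A := by
    rintro x ⟨hx1, hx2⟩
    obtain ⟨y, hy⟩ := mem_sq.1 hx2
    obtain ⟨g, w, rfl⟩ := hilb h2 hδ0 hσ hy.symm
    apply Subgroup.mul_mem_sup _ (mem_sq.2 ⟨w, rfl⟩)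
    refine ⟨g, desc g ?_, rfl⟩
    exact (Subgroup.mul_mem_cancel_right _ (sq_le_Sel _ (mem_sq.2 ⟨w, rfl⟩))).1 hx1
  set X := A.comap j ⊓ S with hX
  have hBX : B ≤ X := by
    apply le_inf _ (sq_le_Sel _)
    intro x hx
    obtain ⟨y, rfl⟩ := mem_sq.1 hx
    exact mem_sq.2 ⟨j y, by simp⟩
  have e3 : B.relIndex X * X.relIndex S = B.relIndex S :=
    Subgroup.relIndex_mul_relIndex B X S hBX inf_le_right
  have e4 : X.relIndex S = A.relIndex (S.map j ⊔ A) := by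
    rw [hX, Subgroup.inf_relIndex_right, Subgroup.relIndex_comap, Subgroup.relIndex_sup_right]
  have hBS : B.relIndex S ≠ 0 ∧ B.relIndex S ≤ 2 ^ T.ncard * 2 ^ n := by
    have e5 : B.relIndex (Sel F ∅) = 2 ^ n := by rw [hSel, unit_relIndex]
    have hle : Sel F ∅ ≤ S := by
      intro x hx
      rw [mem_Sel] at hx ⊢
      intro v _
      exact hx v (by simp)
    have e6 := Subgroup.relIndex_mul_relIndex B (Sel F ∅) S (sq_le_Sel _) hle
    obtain ⟨h3, h4⟩ := Sel_relIndex T hT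
    rw [← e6, e5]
    constructor
    · positivity
    · rw [mul_comm]; exact Nat.mul_le_mul_right _ h4
  have hBX0 : B.relIndex X ≠ 0 := by
    intro h; rw [h] at e3; exact hBS.1 (by rw [← e3]; simp)
  have hXS0 : X.relIndex S ≠ 0 := by
    intro h; rw [h] at e3; exact hBS.1 (by rw [← e3]; simp)
  have hBX2 : 2 ≤ B.relIndex X := by
    have : B.relIndex X ≠ 1 := by
      intro h
      have hle := Subgroup.relIndex_eq_one.1 h
      let d' : Fˣ := Units.mk0 d hd0
      have hjd : j d' ∈ A := mem_sq.2 ⟨Units.mk0 δ hδ0, by ext; simpa [d', j] using hδ⟩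
      have hdX : d' ∈ X := ⟨hjd, desc _ (sq_le_Sel _ hjd)⟩
      obtain ⟨y, hy⟩ := mem_sq.1 (hle hdX)
      exact hd y (by simpa [d'] using congrArg Units.val hy)
    omega
  have hAM0 : A.relIndex M ≠ 0 ∧ A.relIndex M ≤ X.relIndex S := by
    rw [e4] at hXS0 ⊢
    exact ⟨fun h => hXS0 (Subgroup.relIndex_eq_zero_of_le_right hMle h),
      Subgroup.relIndex_le_of_le_right hMle hXS0⟩
  have hH0 : (HH F K).index ≠ 0 := by
    intro h; rw [h] at e2; simp at e2
    exact absurd e2 (by positivity)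
  have hβ0 : B.relIndex (G.map f) ≠ 0 := by
    intro h; rw [h] at e2; simp at e2
    exact absurd e2 (by positivity)
  have hUG : UU K ⊔ A ≤ G := sup_le UU_le_Sel (sq_le_Sel _)
  have e7 : 2 ^ (n + n) * (UU K ⊔ A).relIndex G = A.relIndex G := by
    rw [← hn2, ← unit_relIndex (K := K)]
    exact Subgroup.relIndex_mul_relIndex A _ G le_sup_right hUG
  have hfin : (UU K ⊔ A).relIndex G ≠ 0 := by
    intro h
    rw [h, ← e1] at e7
    exact (mul_ne_zero hAM0.1 hβ0) (by simpa using e7.symm)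
  have hc := card_le hfin
  refine ⟨hH0, ?_⟩
  set c := Nat.card {c : ClassGroup (𝓞 K) // c ^ 2 = 1}
  set i := (HH F K).index
  set β := B.relIndex (G.map f)
  have hpos : 0 < 2 ^ (n + n) := by positivity
  apply Nat.le_of_mul_le_mul_left _ hpos
  calc 2 ^ (n + n) * (2 * i * c) = 2 * i * (2 ^ (n + n) * c) := by ring
    _ ≤ 2 * i * (2 ^ (n + n) * (UU K ⊔ A).relIndex G) := by gcongr
    _ = 2 * A.relIndex M * (β * i) := by rw [e7, ← e1]; ring
    _ ≤ B.relIndex X * X.relIndex S * (β * i) := by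
        gcongr; exact hAM0.2
    _ = B.relIndex S * 2 ^ n := by rw [e3, e2]
    _ ≤ 2 ^ T.ncard * 2 ^ n * 2 ^ n := by gcongr; exact hBS.2
    _ = 2 ^ (n + n) * 2 ^ T.ncard := by rw [pow_add]; ring

end
end QQ

namespace QQ
open NumberField IsDedekindDomain
set_option linter.unusedSectionVars false
open scoped nonZeroDivisors

section
variable {F K : Type*} [Field F] [NumberField F] [Field K] [NumberField K] [Algebra F K]

/-- `K = F(δ)` with `δ² = d` natural, not a square in `F`. -/
structure QE (F K : Type*) [Field F] [Field K] [Algebra F K] (d : ℕ) (δ : K) : Prop where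
  sq : δ ^ 2 = (d : K)
  nsq : ∀ y : F, y ^ 2 ≠ (d : F)
  span : ∀ x : K, ∃ a b : F, x = algebraMap F K a + algebraMap F K b * δ

lemma QE.finrank {d : ℕ} {δ : K} (h : QE F K d δ) : Module.finrank F K = 2 := by
  have hli : LinearIndependent F ![1, δ] := by
    rw [LinearIndependent.pair_iff]
    intro s t hst
    have hst' : algebraMap F K s + algebraMap F K t * δ = 0 := by
      simpa [Algebra.smul_def] using hst
    by_cases ht : t = 0
    · subst ht
      simpa using hst'
    · exfalso
      apply h.nsq (s / t)
      apply (algebraMap F K).injective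
      have ht' : algebraMap F K t ≠ 0 := by simpa using ht
      have : δ = - (algebraMap F K s / algebraMap F K t) := by
        field_simp; linear_combination hst'
      rw [map_pow, map_div₀, map_natCast, ← h.sq, this]; ring
  have hsp : ⊤ ≤ Submodule.span F (Set.range ![1, δ]) := by
    intro x _
    obtain ⟨a, b, rfl⟩ := h.span x
    simp only [Matrix.range_cons, Matrix.range_empty, Set.union_empty]
    rw [show ({1} ∪ {δ} : Set K) = {1, δ} from rfl, Submodule.mem_span_pair]
    exact ⟨a, b, by simp [Algebra.smul_def]⟩
  rw [Module.finrank_eq_card_basis (Module.Basis.mk hli hsp)]; simp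

lemma QE.exists_sigma {d : ℕ} {δ : K} (h : QE F K d δ) : ∃ σ : Gal(K/F), σ δ = -δ := by
  have : Algebra.IsQuadraticExtension F K := ⟨h.finrank⟩
  have hc : Nat.card Gal(K/F) = 2 := by rw [IsGalois.card_aut_eq_finrank, h.finrank]
  obtain ⟨g, hg, -⟩ := (Nat.card_eq_two_iff' (1 : Gal(K/F))).1 hc
  refine ⟨g, ?_⟩
  have : (g δ) ^ 2 = δ ^ 2 := by rw [← map_pow, h.sq, map_natCast]
  rcases sq_eq_sq_iff_eq_or_eq_neg.1 this with h1 | h1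
  · exfalso; apply hg
    ext x
    obtain ⟨a, b, rfl⟩ := h.span x
    simp [h1]
  · exact h1

lemma QE.norm {d : ℕ} {δ : K} (h : QE F K d δ) (a b : F) :
    Algebra.norm F (algebraMap F K a + algebraMap F K b * δ) = a ^ 2 - d * b ^ 2 := by
  have : Algebra.IsQuadraticExtension F K := ⟨h.finrank⟩
  obtain ⟨σ, hσ⟩ := h.exists_sigma
  have hδ0 : δ ≠ 0 := by
    rintro rfl
    apply h.nsq 0
    apply (algebraMap F K).injective
    have := h.sq
    simpa using this
  have hσ1 : σ ≠ 1 := by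
    rintro rfl
    have : δ = -δ := hσ
    exact hδ0 (self_eq_neg.1 this)
  apply (algebraMap F K).injective
  rw [norm_eq h.finrank hσ1]
  simp only [map_add, map_mul, AlgEquiv.commutes, hσ, map_sub, map_pow, map_natCast]
  rw [← h.sq]; ring

lemma QE.HH_eq {d : ℕ} {δ : K} (h : QE F K d δ) {u : (𝓞 F)ˣ} (hu : u ∈ HH F K) :
    ∃ a b y : F, y ≠ 0 ∧ (u : F) * y ^ 2 = a ^ 2 - d * b ^ 2 := by
  rw [HH, Subgroup.mem_comap, Subgroup.mem_sup] at hu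
  obtain ⟨_, ⟨x, hx, rfl⟩, z, hz, e⟩ := hu
  obtain ⟨y, rfl⟩ := mem_sq.1 hz
  obtain ⟨a, b, hab⟩ := h.span (x : K)
  refine ⟨a, b, ((y⁻¹ : Fˣ) : F), y⁻¹.ne_zero, ?_⟩
  have e2 : nn F K x = uu F u * (y⁻¹) ^ 2 := by
    rw [← e]; simp
  have := congrArg Units.val e2
  simp only [Units.coe_map, MonoidHom.coe_coe] at this
  rw [← h.norm, ← hab, this]
  simp

lemma QE.unit_of_top {d : ℕ} {δ : K} (h : QE F K d δ) (hK : OddCl K) {u : (𝓞 F)ˣ} (hu : u ∈ HH F K) :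
    ∃ η : (𝓞 K)ˣ, ∃ a b y : F, y ≠ 0 ∧ (η : K) = algebraMap F K a + algebraMap F K b * δ ∧
      (u : F) * y ^ 2 = a ^ 2 - d * b ^ 2 := by
  rw [HH, Subgroup.mem_comap, Subgroup.mem_sup] at hu
  obtain ⟨_, ⟨x, hx, rfl⟩, z, hz, e⟩ := hu
  obtain ⟨y, rfl⟩ := mem_sq.1 hz
  change x ∈ Sel K ∅ at hx
  rw [Sel_eq_of_odd hK, Subgroup.mem_sup] at hx
  obtain ⟨_, ⟨η, rfl⟩, _, hw, rfl⟩ := hx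
  obtain ⟨w, rfl⟩ := mem_sq.1 hw
  obtain ⟨a, b, hab⟩ := h.span (η : K)
  refine ⟨η, a, b, (((nn F K w * y)⁻¹ : Fˣ) : F), Units.ne_zero _, hab, ?_⟩
  have e2 : nn F K (uu K η) = uu F u * ((nn F K w * y)⁻¹) ^ 2 := by
    rw [← e, map_mul, map_pow, inv_pow, mul_pow, eq_mul_inv_iff_mul_eq]
    exact (mul_assoc _ _ _).symm
  have := congrArg Units.val e2
  simp only [Units.coe_map, MonoidHom.coe_coe] at this
  rw [← h.norm, ← hab]
  refine Eq.trans ?_ this.symm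
  simp

/-- multiquadratic generators -/
structure MQ (F : Type*) [Field F] [CharZero F] (S : Finset ℕ) (r : ℕ → F) : Prop where
  sq : ∀ a ∈ S, (r a) ^ 2 = (a : F)
  gen : IntermediateField.adjoin ℚ (r '' S) = ⊤

lemma exists_int {r : F} {a : ℕ} (h : r ^ 2 = (a : F)) : ∃ x : 𝓞 F, (x : F) = r ∧ x ^ 2 = (a : 𝓞 F) := by
  have : IsIntegral ℤ r := by
    apply IsIntegral.of_pow (n := 2) (by norm_num)
    rw [h]
    exact_mod_cast isIntegral_algebraMap (R := ℤ) (A := F) (x := (a : ℤ))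
  obtain ⟨x, hx⟩ : ∃ x : 𝓞 F, (x : F) = r := ⟨⟨r, this⟩, rfl⟩
  refine ⟨x, hx, ?_⟩
  apply RingOfIntegers.coe_injective
  rw [map_pow, map_natCast]
  change (x : F) ^ 2 = _
  rw [hx]; exact h

lemma MQ.ext_hom {S : Finset ℕ} {r : ℕ → F} (h : MQ F S r) {E : Type*} [Field E] [Algebra ℚ E]
    {f g : F →ₐ[ℚ] E} (hfg : ∀ a ∈ S, f (r a) = g (r a)) : f = g := by
  have : (⊤ : IntermediateField ℚ F) ≤ 
      (AlgHom.equalizer f g).toIntermediateField (fun x hx => by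
        simp only [AlgHom.mem_equalizer, map_inv₀] at hx ⊢; rw [hx]) := by
    rw [← h.gen, IntermediateField.adjoin_le_iff]
    rintro _ ⟨a, ha, rfl⟩
    exact hfg a ha
  ext x
  exact this (IntermediateField.mem_top (x := x))

lemma MQ.ext_gal {S : Finset ℕ} {r : ℕ → F} (h : MQ F S r)
    {f g : Gal(F/ℚ)} (hfg : ∀ a ∈ S, f (r a) = g (r a)) : f = g := by
  have := h.ext_hom (f := (f : F →ₐ[ℚ] F)) (g := (g : F →ₐ[ℚ] F)) hfg
  ext x
  exact DFunLike.congr_fun this x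

lemma sign_gal {r : F} {a : ℕ} (h : r ^ 2 = (a : F)) (g : Gal(F/ℚ)) : g r = r ∨ g r = -r := by
  have : (g r) ^ 2 = r ^ 2 := by rw [← map_pow, h, map_natCast]
  exact sq_eq_sq_iff_eq_or_eq_neg.1 this

lemma MQ.invol {S : Finset ℕ} {r : ℕ → F} (h : MQ F S r) (g : Gal(F/ℚ)) : g * g = 1 := by
  apply h.ext_gal
  intro a ha
  rw [AlgEquiv.mul_apply]
  rcases sign_gal (h.sq a ha) g with e | e <;> simp [e]

lemma MQ.isGalois {S : Finset ℕ} {r : ℕ → F} (h : MQ F S r) : IsGalois ℚ F := by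
  have : Normal ℚ F := by
    rw [normal_iff]
    intro x
    refine ⟨Algebra.IsIntegral.isIntegral x, ?_⟩
    apply IntermediateField.splits_of_mem_adjoin ℚ F (S := r '' S) _
      (h.gen ▸ IntermediateField.mem_top)
    rintro _ ⟨a, ha, rfl⟩
    refine ⟨Algebra.IsIntegral.isIntegral _, ?_⟩
    have hs := h.sq a ha
    have hdvd : minpoly ℚ (r a) ∣ (Polynomial.X ^ 2 - Polynomial.C (a : ℚ)) := by
      apply minpoly.dvd
      simp [hs]
    have h2 : ((Polynomial.X ^ 2 - Polynomial.C (a : ℚ)).map (algebraMap ℚ F)) =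
        (Polynomial.X - Polynomial.C (r a)) * (Polynomial.X - Polynomial.C (-(r a))) := by
      have h3 : (algebraMap ℚ F) (a : ℚ) = r a ^ 2 := by rw [map_natCast, hs]
      rw [Polynomial.map_sub, Polynomial.map_pow, Polynomial.map_X, Polynomial.map_C, h3,
        map_pow, map_neg]; ring
    apply Polynomial.Splits.of_dvd _ _ (Polynomial.map_dvd _ hdvd)
    · rw [h2]; exact (Polynomial.Splits.X_sub_C _).mul (Polynomial.Splits.X_sub_C _)
    · rw [h2]; exact mul_ne_zero (Polynomial.X_sub_C_ne_zero _) (Polynomial.X_sub_C_ne_zero _)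
  exact ⟨⟩

lemma MQ.finrank_le {S : Finset ℕ} {r : ℕ → F} (h : MQ F S r) : Module.finrank ℚ F ≤ 2 ^ S.card := by
  classical
  have := h.isGalois
  rw [← IsGalois.card_aut_eq_finrank]
  let φ : Gal(F/ℚ) → (S → Bool) := fun g a => decide (g (r a) = r a)
  have hφ : Function.Injective φ := by
    intro f g hfg
    apply h.ext_gal
    intro a ha
    have e := congrFun hfg ⟨a, ha⟩
    simp only [φ, decide_eq_decide] at e
    rcases sign_gal (h.sq a ha) f with h1 | h1
    · rw [h1, e.1 h1]
    · rcases sign_gal (h.sq a ha) g with h2 | h2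
      · rw [h2, e.2 h2]
      · rw [h1, h2]
  have := Nat.card_le_card_of_injective φ hφ
  simpa using this

lemma MQ.totallyReal {S : Finset ℕ} {r : ℕ → F} (h : MQ F S r) : IsTotallyReal F := by
  refine ⟨fun v => ?_⟩
  rw [InfinitePlace.isReal_iff, ComplexEmbedding.isReal_iff]
  have : (ComplexEmbedding.conjugate v.embedding).toRatAlgHom = v.embedding.toRatAlgHom := by
    apply h.ext_hom
    intro a ha
    change (starRingEnd ℂ) (v.embedding (r a)) = v.embedding (r a)
    have hs : (v.embedding (r a)) ^ 2 = (a : ℂ) := by rw [← map_pow, h.sq a ha, map_natCast]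
    have ht : ((Real.sqrt a : ℝ) : ℂ) ^ 2 = (a : ℂ) := by
      rw [← Complex.ofReal_pow, Real.sq_sqrt (by positivity)]; simp
    rw [← ht] at hs
    rcases sq_eq_sq_iff_eq_or_eq_neg.1 hs with e | e <;> rw [e] <;> simp
  ext x
  exact DFunLike.congr_fun this x

end
end QQ

namespace QQ
open NumberField IsDedekindDomain
set_option linter.unusedSectionVars false
open scoped nonZeroDivisors Pointwise

section
variable {F K : Type*} [Field F] [NumberField F] [Field K] [NumberField K] [Algebra F K]

lemma under_eq {ℓ : ℕ} (hℓ : ℓ.Prime) (v : HeightOneSpectrum (𝓞 F)) (hv : (ℓ : 𝓞 F) ∈ v.asIdeal) :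
    v.asIdeal.under ℤ = Ideal.span {(ℓ : ℤ)} := by
  have hmax : (Ideal.span {(ℓ : ℤ)}).IsMaximal :=
    PrincipalIdealRing.isMaximal_of_irreducible (Nat.prime_iff_prime_int.1 hℓ).irreducible
  symm
  apply hmax.eq_of_le
  · exact (inferInstance : (v.asIdeal.under ℤ).IsPrime).ne_top
  · rw [Ideal.span_singleton_le_iff_mem, Ideal.under_def, Ideal.mem_comap]
    simpa using hv

lemma frob [IsGalois ℚ F] {ℓ : ℕ} (hℓ : ℓ.Prime) (v : HeightOneSpectrum (𝓞 F))
    (hv : (ℓ : 𝓞 F) ∈ v.asIdeal) :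
    ∃ g : Gal(F/ℚ), (∀ x : 𝓞 F, g • x - x ^ ℓ ∈ v.asIdeal) ∧
      g ∈ MulAction.stabilizer Gal(F/ℚ) v.asIdeal := by
  have : Finite (𝓞 F ⧸ v.asIdeal) := Ideal.finiteQuotientOfFreeOfNeBot _ v.ne_bot
  obtain ⟨g, hg⟩ := IsArithFrobAt.exists_of_isInvariant ℤ Gal(F/ℚ) v.asIdeal
  refine ⟨g, fun x => ?_, hg.mem_stabilizer⟩
  have := hg x
  rw [under_eq hℓ v hv] at this
  have hc : Nat.card (ℤ ⧸ Ideal.span {(ℓ : ℤ)}) = ℓ := by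
    rw [Nat.card_congr (Int.quotientSpanNatEquivZMod ℓ).toEquiv, Nat.card_zmod]
  rw [hc] at this
  exact this

lemma count [IsGalois ℚ F] {ℓ : ℕ} (hℓ : ℓ.Prime) (m : ℕ)
    (h : ∀ v : HeightOneSpectrum (𝓞 F), (ℓ : 𝓞 F) ∈ v.asIdeal →
      m ≤ Nat.card (MulAction.stabilizer Gal(F/ℚ) v.asIdeal)) :
    {v : HeightOneSpectrum (𝓞 F) | (ℓ : 𝓞 F) ∈ v.asIdeal}.Finite ∧
    {v : HeightOneSpectrum (𝓞 F) | (ℓ : 𝓞 F) ∈ v.asIdeal}.ncard * m ≤ Module.finrank ℚ F := by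
  set V := {v : HeightOneSpectrum (𝓞 F) | (ℓ : 𝓞 F) ∈ v.asIdeal} with hV
  rcases V.eq_empty_or_nonempty with h0 | ⟨v, hv⟩
  · rw [h0]; simp
  have hlo : v.asIdeal.LiesOver (Ideal.span {(ℓ : ℤ)}) := ⟨(under_eq hℓ v hv).symm⟩
  have ho := Algebra.IsInvariant.orbit_eq_primesOver ℤ (𝓞 F) Gal(F/ℚ)
    (Ideal.span {(ℓ : ℤ)}) v.asIdeal
  have hinj : Set.InjOn (fun w : HeightOneSpectrum (𝓞 F) => w.asIdeal) V :=
    fun a _ b _ hab => HeightOneSpectrum.ext hab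
  have himg : (fun w : HeightOneSpectrum (𝓞 F) => w.asIdeal) '' V ⊆
      MulAction.orbit Gal(F/ℚ) v.asIdeal := by
    rintro _ ⟨w, hw, rfl⟩
    rw [ho]
    exact ⟨w.isPrime, ⟨(under_eq hℓ w hw).symm⟩⟩
  have hof : (MulAction.orbit Gal(F/ℚ) v.asIdeal).Finite := Set.finite_range _
  refine ⟨Set.Finite.of_finite_image (hof.subset himg) hinj, ?_⟩
  rw [← hinj.ncard_image, ← IsGalois.card_aut_eq_finrank,
    ← Nat.card_congr (MulAction.orbitProdStabilizerEquivGroup Gal(F/ℚ) v.asIdeal), Nat.card_prod,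
    Nat.card_coe_set_eq]
  exact Nat.mul_le_mul (Set.ncard_le_ncard himg hof) (h v hv)

lemma count1 [IsGalois ℚ F] {ℓ : ℕ} (hℓ : ℓ.Prime) :
    {v : HeightOneSpectrum (𝓞 F) | (ℓ : 𝓞 F) ∈ v.asIdeal}.Finite ∧
    {v : HeightOneSpectrum (𝓞 F) | (ℓ : 𝓞 F) ∈ v.asIdeal}.ncard ≤ Module.finrank ℚ F := by
  have := count (F := F) hℓ 1 (fun v _ => Nat.card_pos)
  simpa using this

lemma count2 [IsGalois ℚ F] {ℓ : ℕ} (hℓ : ℓ.Prime)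
    (h : ∀ v : HeightOneSpectrum (𝓞 F), (ℓ : 𝓞 F) ∈ v.asIdeal →
      ∀ g : Gal(F/ℚ), (∀ x : 𝓞 F, g • x - x ^ ℓ ∈ v.asIdeal) → g ≠ 1) :
    {v : HeightOneSpectrum (𝓞 F) | (ℓ : 𝓞 F) ∈ v.asIdeal}.Finite ∧
    {v : HeightOneSpectrum (𝓞 F) | (ℓ : 𝓞 F) ∈ v.asIdeal}.ncard * 2 ≤ Module.finrank ℚ F := by
  apply count hℓ
  intro v hv
  obtain ⟨g, hg, hs⟩ := frob hℓ v hv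
  have hne := h v hv g hg
  have : Nontrivial (MulAction.stabilizer Gal(F/ℚ) v.asIdeal) :=
    ⟨⟨⟨g, hs⟩, 1, fun e => hne (congrArg Subtype.val e)⟩⟩
  exact Finite.one_lt_card

/-- integer divisible -/
lemma int_mem {ℓ : ℕ} (hℓ : ℓ.Prime) (v : HeightOneSpectrum (𝓞 F)) (hv : (ℓ : 𝓞 F) ∈ v.asIdeal)
    (n : ℤ) : (n : 𝓞 F) ∈ v.asIdeal ↔ (n : ZMod ℓ) = 0 := by
  rw [ZMod.intCast_zmod_eq_zero_iff_dvd, ← Ideal.mem_span_singleton, ← under_eq hℓ v hv,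
    Ideal.under_def, Ideal.mem_comap]
  simp

lemma frob_sq {ℓ : ℕ} (hℓ : ℓ.Prime) (hodd : ℓ ≠ 2) (v : HeightOneSpectrum (𝓞 F))
    (hv : (ℓ : 𝓞 F) ∈ v.asIdeal) {g : Gal(F/ℚ)} (hg : ∀ x : 𝓞 F, g • x - x ^ ℓ ∈ v.asIdeal)
    {x : 𝓞 F} {c : ℕ} (hx : x ^ 2 = (c : 𝓞 F)) {ε : ℤ} (hε : (c : ZMod ℓ) ^ (ℓ / 2) = ε) :
    g • x - ε * x ∈ v.asIdeal := by
  have h1 : x ^ ℓ = (c : 𝓞 F) ^ (ℓ / 2) * x := by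
    rw [← hx, ← pow_mul, ← pow_succ]
    congr 1
    have := hℓ.eq_two_or_odd
    omega
  have h2 : (((c : ℤ) ^ (ℓ / 2) - ε : ℤ) : 𝓞 F) ∈ v.asIdeal := by
    rw [int_mem hℓ v hv]; push_cast; rw [hε, sub_self]
  have h3 := v.asIdeal.add_mem (hg x) (v.asIdeal.mul_mem_right x h2)
  rw [h1] at h3
  convert h3 using 1
  push_cast; ring

lemma gal_int_sq {x : 𝓞 F} {c : ℕ} (hx : x ^ 2 = (c : 𝓞 F)) (g : Gal(F/ℚ)) :
    g • x = x ∨ g • x = -x := by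
  have : (g • x) ^ 2 = x ^ 2 := by
    rw [← smul_pow', hx]
    exact map_natCast (MulSemiringAction.toRingHom Gal(F/ℚ) (𝓞 F) g) c
  exact sq_eq_sq_iff_eq_or_eq_neg.1 this

lemma two_mul_notMem {ℓ : ℕ} (hℓ : ℓ.Prime) (hodd : ℓ ≠ 2) (v : HeightOneSpectrum (𝓞 F))
    (hv : (ℓ : 𝓞 F) ∈ v.asIdeal) {x : 𝓞 F} {c : ℕ} (hx : x ^ 2 = (c : 𝓞 F)) (hc : ¬ ℓ ∣ c) :
    2 * x ∉ v.asIdeal := by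
  intro h
  rcases v.isPrime.mem_or_mem h with h | h
  · have : ((2 : ℤ) : 𝓞 F) ∈ v.asIdeal := by exact_mod_cast h
    rw [int_mem hℓ v hv] at this
    have : ((2 : ℕ) : ZMod ℓ) = 0 := by exact_mod_cast this
    rw [ZMod.natCast_eq_zero_iff] at this
    exact hodd ((Nat.prime_dvd_prime_iff_eq hℓ Nat.prime_two).1 this)
  · have h2 : ((c : ℤ) : 𝓞 F) ∈ v.asIdeal := by
      have := Ideal.pow_mem_of_mem _ h 2 (by norm_num)
      rw [hx] at this; exact_mod_cast this
    rw [int_mem hℓ v hv] at h2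
    apply hc
    rw [← ZMod.natCast_eq_zero_iff]; exact_mod_cast h2

lemma frob_neg {ℓ : ℕ} (hℓ : ℓ.Prime) (hodd : ℓ ≠ 2) (v : HeightOneSpectrum (𝓞 F))
    (hv : (ℓ : 𝓞 F) ∈ v.asIdeal) {g : Gal(F/ℚ)} (hg : ∀ x : 𝓞 F, g • x - x ^ ℓ ∈ v.asIdeal)
    {x : 𝓞 F} {c : ℕ} (hx : x ^ 2 = (c : 𝓞 F)) (hε : (c : ZMod ℓ) ^ (ℓ / 2) = -1) :
    g • x = -x := by
  have hf : Fact ℓ.Prime := ⟨hℓ⟩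
  have h1 := frob_sq hℓ hodd v hv hg hx (ε := -1) (by simpa using hε)
  rcases gal_int_sq hx g with h | h
  · exfalso
    refine two_mul_notMem hℓ hodd v hv hx ?_ (by rw [h] at h1; convert h1 using 1; push_cast; ring)
    intro hd
    rw [← ZMod.natCast_eq_zero_iff] at hd
    have := hℓ.two_le
    rw [hd, zero_pow (by omega)] at hε
    have : (1 : ZMod ℓ) = 0 := by linear_combination hε
    exact one_ne_zero this
  · exact h

lemma frob_pos {ℓ : ℕ} (hℓ : ℓ.Prime) (hodd : ℓ ≠ 2) (v : HeightOneSpectrum (𝓞 F))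
    (hv : (ℓ : 𝓞 F) ∈ v.asIdeal) {g : Gal(F/ℚ)} (hg : ∀ x : 𝓞 F, g • x - x ^ ℓ ∈ v.asIdeal)
    {x : 𝓞 F} {c : ℕ} (hx : x ^ 2 = (c : 𝓞 F)) (hε : (c : ZMod ℓ) ^ (ℓ / 2) = 1) :
    g • x = x := by
  have hf : Fact ℓ.Prime := ⟨hℓ⟩
  have h1 := frob_sq hℓ hodd v hv hg hx (ε := 1) (by simpa using hε)
  rcases gal_int_sq hx g with h | h
  · exact h
  · exfalso
    refine two_mul_notMem hℓ hodd v hv hx ?_ (by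
      rw [h] at h1; rw [← neg_mem_iff]; convert h1 using 1; push_cast; ring)
    intro hd
    rw [← ZMod.natCast_eq_zero_iff] at hd
    have := hℓ.two_le
    rw [hd, zero_pow (by omega)] at hε
    exact one_ne_zero hε.symm

/-- unramified valuation -/
lemma val_ell {S : Finset ℕ} {r : ℕ → F} (h : MQ F S r) {ℓ : ℕ} (hℓ : ℓ.Prime) (hodd : ℓ ≠ 2)
    (hS : ∀ a ∈ S, ¬ ℓ ∣ a) (v : HeightOneSpectrum (𝓞 F)) (hv : (ℓ : 𝓞 F) ∈ v.asIdeal) :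
    v.valuation F (ℓ : F) = WithZero.exp (-1 : ℤ) := by
  have := h.isGalois
  have hp := Nat.prime_iff_prime_int.1 hℓ
  have hb : Ideal.span {(ℓ : ℤ)} ≠ ⊥ := by
    simpa using hℓ.ne_zero
  have hpr : (Ideal.span {(ℓ : ℤ)}).IsPrime := (Ideal.span_singleton_prime hp.ne_zero).2 hp
  let w : HeightOneSpectrum ℤ := ⟨Ideal.span {(ℓ : ℤ)}, hpr, hb⟩
  have hlo : v.asIdeal.LiesOver w.asIdeal := ⟨(under_eq hℓ v hv).symm⟩
  have e := HeightOneSpectrum.valuation_liesOver F w v (ℓ : ℚ)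
  rw [ram_one_Z w.asIdeal w.ne_bot v.asIdeal, pow_one, map_natCast (algebraMap ℚ F)] at e
  · rw [← e]
    have e2 := w.valuation_of_algebraMap (K := ℚ) (ℓ : ℤ)
    rw [w.intValuation_singleton hp.ne_zero rfl] at e2
    rw [← e2]; simp
  · intro g hg
    apply h.ext_gal
    intro a ha
    obtain ⟨x, hx, hx2⟩ := exists_int (h.sq a ha)
    rcases gal_int_sq hx2 g with h1 | h1
    · have := congrArg (fun z : 𝓞 F => (z : F)) h1
      rw [← hx]; exact this
    · exfalso
      have h2 := hg x
      rw [h1] at h2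
      apply two_mul_notMem hℓ hodd v hv hx2 (hS a ha)
      rw [← neg_mem_iff]; convert h2 using 1; ring

lemma exp_not_sq : ¬ IsSquare (WithZero.exp (-1 : ℤ)) := by
  rintro ⟨x, hx⟩
  have h0 : x ≠ 0 := by rintro rfl; simp at hx
  have := congrArg WithZero.log hx
  rw [WithZero.log_exp, WithZero.log_mul h0 h0] at this
  omega

/-- the symbol lemma -/
lemma symb (v : HeightOneSpectrum (𝓞 F)) {l : F}
    (hl : v.valuation F l = WithZero.exp (-1 : ℤ)) {u : (𝓞 F)ˣ} {a b y : F} (hy : y ≠ 0)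
    (e : (u : F) * y ^ 2 = a ^ 2 - l * b ^ 2) :
    ∃ m c : 𝓞 F, m ∉ v.asIdeal ∧ c ∉ v.asIdeal ∧ (u : 𝓞 F) * m ^ 2 - c ^ 2 ∈ v.asIdeal := by
  set V := v.valuation F with hV
  have hu : V (u : F) = 1 := by
    rw [hV]
    apply (HeightOneSpectrum.valuation_eq_one_iff_notMem v).2
    exact fun h => v.isPrime.ne_top (Ideal.eq_top_of_isUnit_mem _ h u.isUnit)
  have hyv : V y ≠ 0 := (V.ne_zero_iff).2 hy
  have hn : V (y ^ 2) = V (a ^ 2 - l * b ^ 2) := by rw [← e, map_mul, hu, one_mul]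
  have key : V (l * b ^ 2) < V (a ^ 2) := by
    by_contra hlt
    push Not at hlt
    rcases hlt.lt_or_eq with h1 | h1
    · rw [Valuation.map_sub_eq_of_lt_right _ h1] at hn
      have hb : V b ≠ 0 := by
        intro h0
        rw [map_mul, map_pow V b, h0] at h1; simp at h1
      apply exp_not_sq
      rw [← hl]
      refine ⟨V y / V b, ?_⟩
      rw [map_pow, map_mul, map_pow] at hn
      rw [div_mul_div_comm, eq_div_iff (mul_ne_zero hb hb), ← pow_two, ← pow_two, hn]
    · by_cases hb : V b = 0
      · have hb0 : b = 0 := (V.zero_iff).1 hb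
        subst hb0
        simp at h1
        subst h1
        simp at hn
        exact hy hn
      · apply exp_not_sq
        rw [← hl]
        refine ⟨V a / V b, ?_⟩
        rw [map_pow, map_mul, map_pow] at h1
        rw [div_mul_div_comm, eq_div_iff (mul_ne_zero hb hb), ← pow_two, ← pow_two, h1]
  have hay : V (a / y) = 1 := by
    rw [Valuation.map_sub_eq_of_lt_left _ key, map_pow, map_pow] at hn
    have : V y = V a := (pow_left_inj₀ zero_le zero_le (two_ne_zero)).1 hn
    rw [map_div₀, ← this, div_self hyv]
  obtain ⟨c, m, hm⟩ := v.exists_primeCompl_mul_eq_of_integer (a / y) hay.le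
  have hmV : V (algebraMap (𝓞 F) F m) = 1 :=
    (HeightOneSpectrum.valuation_eq_one_iff_notMem v).2 m.2
  refine ⟨m, c, m.2, ?_, ?_⟩
  · apply (HeightOneSpectrum.valuation_eq_one_iff_notMem (K := F) v).1
    rw [← hm, map_mul]
    change V _ * V _ = 1
    rw [hay, hmV, one_mul]
  · apply (HeightOneSpectrum.valuation_lt_one_iff_mem (K := F) v _).1
    have e3 : algebraMap (𝓞 F) F ((u : 𝓞 F) * m ^ 2 - c ^ 2) =
        - (l * b ^ 2) * (algebraMap (𝓞 F) F m) ^ 2 / y ^ 2 := by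
      rw [map_sub, map_mul, map_pow, map_pow, ← hm]
      field_simp
      linear_combination (algebraMap (𝓞 F) F m) ^ 2 * e
    change V (algebraMap (𝓞 F) F ((u : 𝓞 F) * m ^ 2 - c ^ 2)) < 1
    rw [e3]
    rw [Valuation.map_sub_eq_of_lt_left _ key] at hn
    rw [map_div₀, hn, map_mul, Valuation.map_neg, map_pow V _ 2, hmV, one_pow, mul_one]
    refine (div_lt_one₀ ?_).2 key
    exact lt_of_le_of_lt zero_le key
/-- Frobenius power norm -/
lemma frob_pow {ℓ : ℕ} (hℓ : ℓ.Prime) (hodd : ℓ ≠ 2) (v : HeightOneSpectrum (𝓞 F))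
    {g : Gal(F/ℚ)} (hg : ∀ x : 𝓞 F, g • x - x ^ ℓ ∈ v.asIdeal) (hgg : g * g = 1)
    {x : 𝓞 F} (hx : x ∉ v.asIdeal) :
    (Ideal.Quotient.mk v.asIdeal x * Ideal.Quotient.mk v.asIdeal (g • x)) ^ (2 * (ℓ / 2)) = 1 := by
  have h1 : ∀ x, Ideal.Quotient.mk v.asIdeal (g • x) = Ideal.Quotient.mk v.asIdeal x ^ ℓ := by
    intro x
    rw [← map_pow]; exact Ideal.Quotient.eq.2 (hg x)
  have h2 : Ideal.Quotient.mk v.asIdeal x = (Ideal.Quotient.mk v.asIdeal x ^ ℓ) ^ ℓ := by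
    rw [← h1, ← h1, smul_smul, hgg, one_smul]
  have h0 : Ideal.Quotient.mk v.asIdeal x ≠ 0 := fun h => hx (Ideal.Quotient.eq_zero_iff_mem.1 h)
  rw [h1]
  set t := Ideal.Quotient.mk v.asIdeal x
  apply mul_left_cancel₀ h0
  rw [mul_one]
  conv_rhs => rw [h2]
  rw [← pow_succ', ← pow_mul, ← pow_succ', ← pow_mul]
  congr 1
  obtain ⟨k, rfl⟩ := hℓ.odd_of_ne_two hodd
  have : (2 * k + 1) / 2 = k := by omega
  rw [this]; ring

lemma chi_HH {ℓ : ℕ} (hℓ : ℓ.Prime) (hodd : ℓ ≠ 2) (v : HeightOneSpectrum (𝓞 F))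
    {g : Gal(F/ℚ)} (hg : ∀ x : 𝓞 F, g • x - x ^ ℓ ∈ v.asIdeal) (hgg : g * g = 1)
    (hl : v.valuation F (ℓ : F) = WithZero.exp (-1 : ℤ)) {u : (𝓞 F)ˣ} {a b y : F} (hy : y ≠ 0)
    (e : (u : F) * y ^ 2 = a ^ 2 - ℓ * b ^ 2) :
    (Ideal.Quotient.mk v.asIdeal u * Ideal.Quotient.mk v.asIdeal (g • (u : 𝓞 F))) ^ (ℓ / 2) = 1 := by
  obtain ⟨m, c, hm, hc, h⟩ := symb v hl hy e
  have h1 : ∀ x, Ideal.Quotient.mk v.asIdeal (g • x) = Ideal.Quotient.mk v.asIdeal x ^ ℓ := by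
    intro x
    rw [← map_pow]; exact Ideal.Quotient.eq.2 (hg x)
  have h3 := Ideal.Quotient.eq.2 h
  have hm2 := frob_pow hℓ hodd v hg hgg hm
  have hc2 := frob_pow hℓ hodd v hg hgg hc
  rw [h1] at hm2 hc2 ⊢
  rw [map_mul, map_pow, map_pow] at h3
  rw [pow_mul] at hm2 hc2
  calc _ = (Ideal.Quotient.mk v.asIdeal u * Ideal.Quotient.mk v.asIdeal u ^ ℓ) ^ (ℓ / 2) *
      ((Ideal.Quotient.mk v.asIdeal m * Ideal.Quotient.mk v.asIdeal m ^ ℓ) ^ 2) ^ (ℓ / 2) := by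
        rw [hm2, mul_one]
    _ = (((Ideal.Quotient.mk v.asIdeal u * (Ideal.Quotient.mk v.asIdeal m) ^ 2)) *
      ((Ideal.Quotient.mk v.asIdeal u * (Ideal.Quotient.mk v.asIdeal m) ^ 2)) ^ ℓ) ^ (ℓ / 2) := by
        ring
    _ = ((Ideal.Quotient.mk v.asIdeal c * Ideal.Quotient.mk v.asIdeal c ^ ℓ) ^ 2) ^ (ℓ / 2) := by
        rw [h3]; ring
    _ = 1 := hc2

lemma chi_one {ℓ : ℕ} (hℓ : ℓ.Prime) (hodd : ℓ ≠ 2) (v : HeightOneSpectrum (𝓞 F))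
    (hg : ∀ x : 𝓞 F, x - x ^ ℓ ∈ v.asIdeal)
    (hl : v.valuation F (ℓ : F) = WithZero.exp (-1 : ℤ)) {u : (𝓞 F)ˣ} {a b y : F} (hy : y ≠ 0)
    (e : (u : F) * y ^ 2 = a ^ 2 - ℓ * b ^ 2) :
    (Ideal.Quotient.mk v.asIdeal u) ^ (ℓ / 2) = 1 := by
  obtain ⟨m, c, hm, hc, h⟩ := symb v hl hy e
  have h2 : ∀ x, x ∉ v.asIdeal → (Ideal.Quotient.mk v.asIdeal x ^ 2) ^ (ℓ / 2) = 1 := by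
    intro x hx
    have h0 : Ideal.Quotient.mk v.asIdeal x ≠ 0 := fun h => hx (Ideal.Quotient.eq_zero_iff_mem.1 h)
    have h1 := Ideal.Quotient.eq.2 (hg x)
    rw [map_pow] at h1
    apply mul_left_cancel₀ h0
    rw [mul_one]
    conv_rhs => rw [h1]
    rw [← pow_mul, ← pow_succ']
    congr 1
    obtain ⟨k, rfl⟩ := hℓ.odd_of_ne_two hodd
    omega
  have h3 := Ideal.Quotient.eq.2 h
  rw [map_mul, map_pow, map_pow] at h3
  rw [← mul_one (_ ^ (ℓ / 2)), ← h2 m hm, ← mul_pow, h3, h2 c hc, h2 m hm]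

end
end QQ

namespace QQ
open NumberField IsDedekindDomain
set_option linter.unusedSectionVars false
open scoped nonZeroDivisors Pointwise

section
variable {G : Type*} [CommGroup G] [Finite G]

lemma card_ker_pow (h : Nat.card {c : G // c ^ 2 = 1} ≤ 2) (j : ℕ) :
    Nat.card (powMonoidHom (2 ^ j) : G →* G).ker ≤ 2 ^ j := by
  induction j with
  | zero => 
    have : (powMonoidHom (2 ^ 0) : G →* G).ker = ⊥ := by
      ext x; simp [MonoidHom.mem_ker]
    rw [this]; simp
  | succ j ih =>
    let f : (powMonoidHom (2 ^ (j + 1)) : G →* G).ker →* (powMonoidHom (2 ^ j) : G →* G).ker :=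
      { toFun := fun x => ⟨(x : G) ^ 2, by
          have := x.2
          rw [MonoidHom.mem_ker, powMonoidHom_apply] at this ⊢
          rw [← pow_mul, ← this]; congr 1; ring⟩
        map_one' := by ext; simp
        map_mul' := fun x y => by ext; simp [mul_pow] }
    have h1 := Subgroup.card_mul_index f.ker
    rw [Subgroup.index_ker] at h1
    rw [← h1]
    have h2 : Nat.card f.range ≤ 2 ^ j :=
      le_trans (Nat.card_le_card_of_injective _ Subtype.val_injective) ih
    have h3 : Nat.card f.ker ≤ 2 := by
      refine le_trans ?_ h
      refine Nat.card_le_card_of_injective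
        (fun x : f.ker => (⟨((x : (powMonoidHom (2 ^ (j + 1)) : G →* G).ker) : G), ?_⟩ : {c : G // c ^ 2 = 1})) ?_
      · have := x.2
        rw [MonoidHom.mem_ker] at this
        exact congrArg Subtype.val this
      · intro x y hxy
        apply Subtype.ext; apply Subtype.ext
        exact congrArg (fun z : {c : G // c ^ 2 = 1} => (z : G)) hxy
    calc _ ≤ 2 * 2 ^ j := Nat.mul_le_mul h3 h2
      _ = _ := by ring

lemma cyclic_of_card (hG : IsPGroup 2 G) (h : Nat.card {c : G // c ^ 2 = 1} ≤ 2) : IsCyclic G := by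
  classical
  have := Fintype.ofFinite G
  obtain ⟨k, hk⟩ := IsPGroup.iff_card.1 hG
  apply isCyclic_of_card_pow_eq_one_le
  intro n hn
  obtain ⟨j, hj, e⟩ := (Nat.dvd_prime_pow Nat.prime_two).1 (Nat.gcd_dvd_right n (2 ^ k))
  have h1 : Nat.card (powMonoidHom (2 ^ j) : G →* G).ker ≤ 2 ^ j := card_ker_pow h j
  have h2 : 2 ^ j ≤ n := e ▸ Nat.gcd_le_left _ hn
  refine le_trans ?_ (h1.trans h2)
  rw [← Nat.card_eq_finsetCard]
  refine Nat.card_le_card_of_injective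
    (fun x => (⟨(x : G), ?_⟩ : (powMonoidHom (2 ^ j) : G →* G).ker)) ?_
  · have hx := (Finset.mem_filter.1 x.2).2
    rw [MonoidHom.mem_ker, powMonoidHom_apply, ← e]
    exact pow_gcd_eq_one.2 ⟨hx, by rw [← hk]; exact pow_card_eq_one'⟩
  · intro x y hxy
    apply Subtype.ext
    exact congrArg (fun z : (powMonoidHom (2 ^ j) : G →* G).ker => (z : G)) hxy

lemma sylow_cyclic (h : Nat.card {c : G // c ^ 2 = 1} ≤ 2) (P : Sylow 2 G) :
    IsCyclic (P : Subgroup G) := by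
  apply cyclic_of_card P.isPGroup'
  refine le_trans ?_ h
  refine Nat.card_le_card_of_injective
    (fun x => (⟨((x : (P : Subgroup G)) : G), ?_⟩ : {c : G // c ^ 2 = 1})) ?_
  · have := x.2
    exact congrArg (fun z : (P : Subgroup G) => (z : G)) this
  · intro x y hxy
    apply Subtype.ext; apply Subtype.ext
    exact congrArg (fun z : {c : G // c ^ 2 = 1} => (z : G)) hxy

end

section
variable {F K : Type*} [Field F] [NumberField F] [Field K] [NumberField K] [Algebra F K]

/-- unramified outside `T` -/
def Unr (F K : Type*) [Field F] [NumberField F] [Field K] [NumberField K] [Algebra F K]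
    (δ : K) (v : HeightOneSpectrum (𝓞 F)) : Prop :=
  ∀ σ : Gal(K/F), σ δ = -δ → ∃ θ : 𝓞 K, ∃ m : 𝓞 F, m ∉ v.asIdeal ∧
      (σ • θ - θ) ^ 2 = algebraMap (𝓞 F) (𝓞 K) m

lemma unr1 {d : ℕ} {δ : K} (h : QE F K d δ) (v : HeightOneSpectrum (𝓞 F))
    (h2 : (2 : 𝓞 F) ∉ v.asIdeal) (hd : (d : 𝓞 F) ∉ v.asIdeal) : Unr F K δ v := by
  intro σ hσ
  obtain ⟨x, hx, hx2⟩ := exists_int h.sq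
  refine ⟨x, 2 * 2 * d, ?_, ?_⟩
  · intro hm
    rcases v.isPrime.mem_or_mem hm with hm | hm
    · rcases v.isPrime.mem_or_mem hm with hm | hm <;> exact h2 hm
    · exact hd hm
  · have : σ • x = -x := by
      apply RingOfIntegers.coe_injective
      rw [map_neg]
      change σ (x : K) = -(x : K)
      rw [hx, hσ]
    rw [this, map_mul, map_mul, map_natCast, ← hx2, map_ofNat]; ring

lemma unr2 {d : ℕ} {δ : K} (h : QE F K d δ) (v : HeightOneSpectrum (𝓞 F)) {c : ℕ} {r : F}
    (hr : r ^ 2 = c) (hcd : (d * c) % 4 = 1) (hc : (c : 𝓞 F) ∉ v.asIdeal)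
    (hd : (d : 𝓞 F) ∉ v.asIdeal) : Unr F K δ v := by
  intro σ hσ
  set ρ : K := algebraMap F K r * δ with hρ
  have hρ2 : ρ ^ 2 = ((d * c : ℕ) : K) := by
    rw [hρ, mul_pow, ← map_pow, hr, h.sq]; push_cast; ring
  have hInt1 : IsIntegral ℤ ((1 + ρ) / 2) := by
    refine ⟨Polynomial.X ^ 2 - Polynomial.X - Polynomial.C (((d * c) / 4 : ℕ) : ℤ), ?_, ?_⟩
    · monicity!
    · have h4 : ((d * c : ℕ) : K) = 4 * (((d * c) / 4 : ℕ) : K) + 1 := by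
        have : d * c = 4 * ((d * c) / 4) + 1 := by omega
        exact_mod_cast congrArg (Nat.cast (R := K)) this
      rw [Polynomial.eval₂_sub, Polynomial.eval₂_sub, Polynomial.eval₂_X_pow, Polynomial.eval₂_X,
        Polynomial.eval₂_C, map_natCast]
      rw [← hρ2] at h4
      linear_combination h4 / 4
  obtain ⟨x, hx⟩ : ∃ x : 𝓞 K, (x : K) = (1 + ρ) / 2 := ⟨⟨_, hInt1⟩, rfl⟩
  refine ⟨x, d * c, ?_, ?_⟩
  · intro hm
    rcases v.isPrime.mem_or_mem hm with hm | hm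
    · exact hd hm
    · exact hc hm
  · apply RingOfIntegers.coe_injective
    rw [map_pow, map_sub, map_mul, map_natCast, map_natCast, map_mul, map_natCast, map_natCast]
    change (σ (x : K) - (x : K)) ^ 2 = _
    have h3 : σ ρ = -ρ := by rw [hρ, map_mul, hσ, AlgEquiv.commutes]; ring
    rw [hx, map_div₀, map_add, map_one, h3, map_ofNat]
    push_cast at hρ2
    rw [← hρ2]; ring

lemma stepU {d : ℕ} {δ : K} (h : QE F K d δ) [IsTotallyReal F] [IsTotallyReal K] (hF : OddCl F)
    (T : Set (HeightOneSpectrum (𝓞 F))) (hT : T.Finite) (hun : ∀ v, v ∉ T → Unr F K δ v) :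
    (HH F K).index ≠ 0 ∧
    2 * (HH F K).index * Nat.card {c : ClassGroup (𝓞 K) // c ^ 2 = 1} ≤ 2 ^ T.ncard := by
  obtain ⟨σ, hσ⟩ := h.exists_sigma
  exact step h.finrank σ δ (d : F) (by rw [h.sq, map_natCast]) h.nsq hσ hF T hT
    (fun v hv => hun v hv σ hσ)

lemma odd_of_card (h : Nat.card {c : ClassGroup (𝓞 K) // c ^ 2 = 1} ≤ 1) : OddCl K := by
  intro c hc
  have := Finite.card_le_one_iff_subsingleton.1 h
  exact congrArg Subtype.val (Subsingleton.elim (⟨c, hc⟩ : {c : ClassGroup (𝓞 K) // c ^ 2 = 1})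
    ⟨1, one_pow 2⟩)

lemma card_pos' : 0 < Nat.card {c : ClassGroup (𝓞 K) // c ^ 2 = 1} := by
  have : Nonempty {c : ClassGroup (𝓞 K) // c ^ 2 = 1} := ⟨⟨1, one_pow 2⟩⟩
  exact Nat.card_pos

lemma corA {d : ℕ} {δ : K} (h : QE F K d δ) [IsTotallyReal F] [IsTotallyReal K] (hF : OddCl F)
    (T : Set (HeightOneSpectrum (𝓞 F))) (hT : T.Finite) (hun : ∀ v, v ∉ T → Unr F K δ v)
    (hc : T.ncard ≤ 1) : OddCl K ∧ HH F K = ⊤ := by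
  obtain ⟨h0, h1⟩ := stepU h hF T hT hun
  have h2 : 2 ^ T.ncard ≤ 2 ^ 1 := Nat.pow_le_pow_right (by norm_num) hc
  have h3 := card_pos' (K := K)
  have h4 := h1.trans h2
  constructor
  · apply odd_of_card
    by_contra hlt
    have : 2 * 1 * 2 ≤ 2 * (HH F K).index * Nat.card {c : ClassGroup (𝓞 K) // c ^ 2 = 1} := by
      gcongr <;> omega
    omega
  · rw [← Subgroup.index_eq_one]
    by_contra hlt
    have : 2 * 2 * 1 ≤ 2 * (HH F K).index * Nat.card {c : ClassGroup (𝓞 K) // c ^ 2 = 1} := by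
      gcongr <;> omega
    omega

lemma corB {d : ℕ} {δ : K} (h : QE F K d δ) [IsTotallyReal F] [IsTotallyReal K] (hF : OddCl F)
    (T : Set (HeightOneSpectrum (𝓞 F))) (hT : T.Finite) (hun : ∀ v, v ∉ T → Unr F K δ v)
    (hc : T.ncard ≤ 2) {u : (𝓞 F)ˣ} (hu : u ∉ HH F K) : OddCl K := by
  obtain ⟨h0, h1⟩ := stepU h hF T hT hun
  have h2 : 2 ^ T.ncard ≤ 2 ^ 2 := Nat.pow_le_pow_right (by norm_num) hc
  have h4 := h1.trans h2
  have h5 : (HH F K).index ≠ 1 := by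
    rw [Ne, Subgroup.index_eq_one]
    intro e; exact hu (e ▸ Subgroup.mem_top u)
  apply odd_of_card
  by_contra hlt
  have : 2 * 2 * 2 ≤ 2 * (HH F K).index * Nat.card {c : ClassGroup (𝓞 K) // c ^ 2 = 1} := by
    gcongr <;> omega
  omega

lemma sq_mem_HH (u : (𝓞 F)ˣ) : u ^ 2 ∈ HH F K := by
  rw [HH, Subgroup.mem_comap, map_pow]
  exact Subgroup.mem_sup_right (mem_sq.2 ⟨_, rfl⟩)

lemma index_four {A : Type*} [CommGroup A] {H : Subgroup A} (h0 : H.index ≠ 0) {u w : A}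
    (hu : u ∉ H) (hw : w ∉ H) (huw : u * w ∉ H) (hsq : ∀ x : A, x ^ 2 ∈ H) : 4 ≤ H.index := by
  classical
  have : Finite (A ⧸ H) := by
    have : H.FiniteIndex := ⟨h0⟩
    exact Subgroup.finite_quotient_of_finiteIndex
  have := Fintype.ofFinite (A ⧸ H)
  rw [Subgroup.index_eq_card, Nat.card_eq_fintype_card]
  obtain ⟨a, ha⟩ : ∃ a : A ⧸ H, a = QuotientGroup.mk u := ⟨_, rfl⟩
  obtain ⟨b, hb⟩ : ∃ a : A ⧸ H, a = QuotientGroup.mk w := ⟨_, rfl⟩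
  have ha1 : a ≠ 1 := fun e => hu ((QuotientGroup.eq_one_iff u).1 (ha ▸ e))
  have hb1 : b ≠ 1 := fun e => hw ((QuotientGroup.eq_one_iff w).1 (hb ▸ e))
  have hab1 : a * b ≠ 1 := fun e => huw ((QuotientGroup.eq_one_iff (u * w)).1 (by
    rw [QuotientGroup.mk_mul, ← ha, ← hb, e]))
  have hb2 : b * b = 1 := by
    rw [← pow_two, hb]; exact (QuotientGroup.eq_one_iff (w ^ 2)).2 (hsq w)
  have hab : a ≠ b := fun e => hab1 (by rw [e, hb2])
  have : ({1, a, b, a * b} : Finset (A ⧸ H)).card = 4 := by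
    rw [Finset.card_insert_of_notMem, Finset.card_insert_of_notMem, Finset.card_insert_of_notMem,
      Finset.card_singleton]
    · rw [Finset.mem_singleton]
      exact fun e => ha1 (right_eq_mul.1 e)
    · rw [Finset.mem_insert, Finset.mem_singleton]
      rintro (e | e)
      · exact hab e
      · exact hb1 (left_eq_mul.1 e)
    · simp [ha1.symm, hb1.symm, hab1.symm]
  rw [← this]; exact Finset.card_le_univ _

lemma corC {d : ℕ} {δ : K} (h : QE F K d δ) [IsTotallyReal F] [IsTotallyReal K] (hF : OddCl F)
    (T : Set (HeightOneSpectrum (𝓞 F))) (hT : T.Finite) (hun : ∀ v, v ∉ T → Unr F K δ v)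
    (hc : T.ncard ≤ 4) {u w : (𝓞 F)ˣ} (hu : u ∉ HH F K) (hw : w ∉ HH F K) (huw : u * w ∉ HH F K) :
    Nat.card {c : ClassGroup (𝓞 K) // c ^ 2 = 1} ≤ 2 := by
  classical
  obtain ⟨h0, h1⟩ := stepU h hF T hT hun
  have h2 : 2 ^ T.ncard ≤ 2 ^ 4 := Nat.pow_le_pow_right (by norm_num) hc
  have h4 := h1.trans h2
  have h5 : 4 ≤ (HH F K).index := by
    exact index_four h0 hu hw huw sq_mem_HH
  by_contra hlt
  have : 2 * 4 * 3 ≤ 2 * (HH F K).index * Nat.card {c : ClassGroup (𝓞 K) // c ^ 2 = 1} := by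
    gcongr; omega
  omega

end
end QQ

namespace QQ
open NumberField IsDedekindDomain
set_option linter.unusedSectionVars false
open scoped nonZeroDivisors Pointwise

section
variable {F K : Type*} [Field F] [NumberField F] [Field K] [NumberField K] [Algebra F K]

lemma st0 {r : ℕ → F} (h : MQ F ∅ r) : OddCl F := by
  have hb : Function.Bijective (algebraMap ℚ F) := by
    refine ⟨(algebraMap ℚ F).injective, fun x => ?_⟩
    have h1 : x ∈ (⊤ : IntermediateField ℚ F) := IntermediateField.mem_top
    rw [← h.gen] at h1
    simp only [Finset.coe_empty, Set.image_empty, IntermediateField.adjoin_empty] at h1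
    exact IntermediateField.mem_bot.1 h1
  let e : ℚ ≃+* F := RingEquiv.ofBijective _ hb
  let e2 : 𝓞 ℚ ≃+* 𝓞 F := RingOfIntegers.mapRingEquiv e
  have h1 : IsPrincipalIdealRing (𝓞 ℚ) :=
    IsPrincipalIdealRing.of_surjective Rat.ringOfIntegersEquiv.symm.toRingHom
      Rat.ringOfIntegersEquiv.symm.surjective
  have h2 : IsPrincipalIdealRing (𝓞 F) :=
    IsPrincipalIdealRing.of_surjective e2.toRingHom e2.surjective
  intro c _
  have := (card_classGroup_eq_one_iff (R := 𝓞 F)).2 h2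
  exact (Fintype.card_le_one_iff_subsingleton.1 this.le).elim _ _

lemma exists_v {ℓ : ℕ} (hℓ : ℓ.Prime) : ∃ v : HeightOneSpectrum (𝓞 F), (ℓ : 𝓞 F) ∈ v.asIdeal := by
  have hp := Nat.prime_iff_prime_int.1 hℓ
  have hb : Ideal.span {(ℓ : ℤ)} ≠ ⊥ := by
    simpa using hℓ.ne_zero
  have hpr : (Ideal.span {(ℓ : ℤ)}).IsPrime := (Ideal.span_singleton_prime hp.ne_zero).2 hp
  obtain ⟨⟨P, h1, h2⟩⟩ := (inferInstance : Nonempty ((Ideal.span {(ℓ : ℤ)}).primesOver (𝓞 F)))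
  refine ⟨⟨P, h1, Ideal.ne_bot_of_liesOver_of_ne_bot hb P⟩, ?_⟩
  have : (ℓ : ℤ) ∈ P.under ℤ := by
    rw [← h2.over]; exact Ideal.mem_span_singleton_self _
  rw [Ideal.under_def, Ideal.mem_comap] at this
  simpa using this

lemma neg_one_ne {ℓ : ℕ} (hℓ : ℓ.Prime) (hodd : ℓ ≠ 2) (v : HeightOneSpectrum (𝓞 F))
    (hv : (ℓ : 𝓞 F) ∈ v.asIdeal) : (-1 : 𝓞 F ⧸ v.asIdeal) ≠ 1 := by
  intro h
  have h1 : Ideal.Quotient.mk v.asIdeal (2 * 1) = 0 := by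
    rw [map_mul, map_ofNat, map_one]; linear_combination -h
  refine two_mul_notMem hℓ hodd v hv (x := 1) (c := 1) (by simp) ?_ (Ideal.Quotient.eq_zero_iff_mem.1 h1)
  exact fun hd => hℓ.one_lt.ne' (Nat.dvd_one.1 hd)

lemma adj2 {δ : K} (h : QE F K 2 δ) [IsTotallyReal F] [IsTotallyReal K] (hF : OddCl F)
    (hT : {v : HeightOneSpectrum (𝓞 F) | ((2 : ℕ) : 𝓞 F) ∈ v.asIdeal}.Finite)
    (hc : {v : HeightOneSpectrum (𝓞 F) | ((2 : ℕ) : 𝓞 F) ∈ v.asIdeal}.ncard ≤ 1) : OddCl K := by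
  refine (corA h hF _ hT (fun v hv => ?_) hc).1
  rw [Set.mem_ofPred_eq] at hv
  exact unr1 h v (by exact_mod_cast hv) hv

lemma tp {S : Finset ℕ} {r : ℕ → F} (hM : MQ F S r) (h2 : 2 ∈ S) {p : ℕ} (hp : p.Prime)
    (hodd : p ≠ 2) (hε : ((2 : ℕ) : ZMod p) ^ (p / 2) = -1) :
    {v : HeightOneSpectrum (𝓞 F) | (p : 𝓞 F) ∈ v.asIdeal}.Finite ∧
    {v : HeightOneSpectrum (𝓞 F) | (p : 𝓞 F) ∈ v.asIdeal}.ncard * 2 ≤ 2 ^ S.card := by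
  have := hM.isGalois
  obtain ⟨x, -, hx⟩ := exists_int (hM.sq 2 h2)
  obtain ⟨h1, h3⟩ := count2 (F := F) hp (fun v hv g hg => by
    rintro rfl
    have h1 := frob_neg hp hodd v hv hg hx hε
    rw [one_smul] at h1
    have h0 : x = 0 := self_eq_neg.1 h1
    rw [h0] at hx; norm_num at hx)
  exact ⟨h1, h3.trans hM.finrank_le⟩

lemma st2 {r : ℕ → F} (hM : MQ F {2} r) {p : ℕ} (hp : p.Prime) (hp4 : p % 4 = 1)
    (hε : ((2 : ℕ) : ZMod p) ^ (p / 2) = -1) {δ : K} (h : QE F K p δ)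
    [IsTotallyReal F] [IsTotallyReal K] (hF : OddCl F) : OddCl K ∧ HH F K = ⊤ := by
  obtain ⟨h1, h2⟩ := tp hM (by simp) hp (by rintro rfl; omega) hε
  refine corA h hF _ h1 (fun v hv => ?_) (by simp at h2; omega)
  refine unr2 h v (c := 1) (r := 1) (by simp) (by omega) ?_ hv
  rw [Nat.cast_one]
  exact fun h => v.isPrime.ne_top ((Ideal.eq_top_iff_one _).2 h)

lemma st3 {r : ℕ → F} (hM : MQ F ∅ r) {s : ℕ} (hs : s.Prime) (hs4 : s % 4 = 3)
    {δ : K} (h : QE F K s δ) [IsTotallyReal F] [IsTotallyReal K] (hF : OddCl F) : OddCl K := by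
  have := hM.isGalois
  have hodd : s ≠ 2 := by rintro rfl; omega
  obtain ⟨h1, h2⟩ := count1 (F := F) hs
  obtain ⟨h3, h4⟩ := count1 (F := F) Nat.prime_two
  have hfr := hM.finrank_le
  simp only [Finset.card_empty, pow_zero] at hfr
  refine corB h hF _ (h1.union h3) (fun v hv => ?_)
    ((Set.ncard_union_le _ _).trans (by omega)) (u := -1) ?_
  · simp only [Set.mem_union, Set.mem_ofPred_eq, not_or] at hv
    exact unr1 h v (by exact_mod_cast hv.2) hv.1
  · intro hu
    obtain ⟨a, b, y, hy, e⟩ := h.HH_eq hu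
    obtain ⟨v, hv⟩ := exists_v (F := F) hs
    obtain ⟨g, hg, -⟩ := frob hs v hv
    have hg1 : g = 1 := hM.ext_gal (by simp)
    subst hg1
    have hl := val_ell hM hs hodd (by simp) v hv
    have h5 := chi_one hs hodd v (by simpa using hg) hl hy e
    apply neg_one_ne hs hodd v hv
    have hodd' : Odd (s / 2) := by rw [Nat.odd_iff]; omega
    rw [Units.val_neg, Units.val_one, map_neg, map_one, hodd'.neg_one_pow] at h5
    exact h5

/-- the ramified prime above two -/
lemma two_sq {x : 𝓞 K} {s : ℕ} (hx : x ^ 2 = (s : 𝓞 K)) (hs4 : s % 4 = 3) :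
    Ideal.span {(2 : 𝓞 K)} = (Ideal.span {2, 1 + x}) ^ 2 := by
  obtain ⟨k, rfl⟩ : ∃ k, s = 4 * k + 3 := ⟨s / 4, by omega⟩
  push_cast at hx
  rw [pow_two, Ideal.span_pair_mul_span_pair]
  apply le_antisymm
  · rw [Ideal.span_singleton_le_iff_mem]
    have gen : ∀ J : Ideal (𝓞 K), 2 * 2 ∈ J → 2 * (1 + x) ∈ J → (1 + x) * (1 + x) ∈ J →
        (2 : 𝓞 K) ∈ J := by
      intro J a b c
      have := J.add_mem (J.add_mem (J.add_mem (J.mul_mem_left (-k - 1 : 𝓞 K) a)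
        (J.mul_mem_left (-1) b)) c) a
      convert this using 1
      linear_combination -hx
    apply gen <;> apply Ideal.subset_span <;> simp
  · rw [Ideal.span_le]
    intro z hz
    simp only [Set.mem_insert_iff, Set.mem_singleton_iff] at hz
    rw [SetLike.mem_coe, Ideal.mem_span_singleton]
    rcases hz with rfl | rfl | rfl | rfl
    · exact ⟨2, rfl⟩
    · exact ⟨_, rfl⟩
    · exact ⟨1 + x, by ring⟩
    · exact ⟨2 * k + 2 + x, by linear_combination hx⟩

lemma two_unit {r : ℕ → K} {s : ℕ} (hM : MQ K {s} r) (hs4 : s % 4 = 3) (hK : OddCl K) :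
    ∃ u : (𝓞 K)ˣ, ∃ y : 𝓞 K, (u : 𝓞 K) * y ^ 2 = 2 := by
  obtain ⟨x, -, hx⟩ := exists_int (hM.sq s (by simp))
  have h2 : (2 : 𝓞 K) ≠ 0 := two_ne_zero
  have h3 : toU 2 h2 ∈ Sel K ∅ := (mem_Sel_int h2).2 ⟨_, two_sq hx hs4⟩
  rw [Sel_eq_of_odd hK, Subgroup.mem_sup] at h3
  obtain ⟨_, ⟨u, rfl⟩, z, hz, e⟩ := h3
  obtain ⟨y, rfl⟩ := mem_sq.1 hz
  have e1 : (u : K) * (y : K) ^ 2 = 2 := by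
    have := congrArg Units.val e
    simp only [toU, Units.val_mul, Units.coe_map, Units.val_pow_eq_pow_val, Units.val_mk0] at this
    exact this.trans (map_ofNat _ 2)
  have hi : IsIntegral ℤ (y : K) := by
    apply IsIntegral.of_pow (n := 2) (by norm_num)
    have : (y : K) ^ 2 = algebraMap (𝓞 K) K (((u⁻¹ : (𝓞 K)ˣ) : 𝓞 K) * 2) := by
      rw [map_mul, map_ofNat, ← e1, ← mul_assoc, ← map_mul]; simp
    rw [this]; exact RingOfIntegers.isIntegral_coe _
  obtain ⟨Y, hY⟩ : ∃ Y : 𝓞 K, (Y : K) = y := ⟨⟨y, hi⟩, rfl⟩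
  refine ⟨u, Y, ?_⟩
  apply RingOfIntegers.coe_injective
  rw [map_mul, map_pow, map_ofNat]
  change (u : K) * (Y : K) ^ 2 = 2
  rw [hY, e1]

lemma two_count {r : ℕ → K} {s : ℕ} (hM : MQ K {s} r) (hs4 : s % 4 = 3) :
    {v : HeightOneSpectrum (𝓞 K) | ((2 : ℕ) : 𝓞 K) ∈ v.asIdeal}.Finite ∧
    {v : HeightOneSpectrum (𝓞 K) | ((2 : ℕ) : 𝓞 K) ∈ v.asIdeal}.ncard ≤ 1 := by
  have := hM.isGalois
  refine ⟨(count1 Nat.prime_two).1, ?_⟩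
  obtain ⟨x, -, hx⟩ := exists_int (hM.sq s (by simp))
  have e := two_sq hx hs4
  set I := Ideal.span {2, 1 + x}
  have hfr := hM.finrank_le
  have hpos : 0 < Module.finrank ℚ K := Module.finrank_pos
  simp only [Finset.card_singleton, pow_one] at hfr
  have hn : Ideal.absNorm I ^ 2 = 2 ^ Module.finrank ℚ K := by
    rw [← map_pow, ← e, Ideal.absNorm_span_singleton,
      show (2 : 𝓞 K) = algebraMap ℤ (𝓞 K) 2 by simp, Algebra.norm_algebraMap,
      RingOfIntegers.rank]
    simp [Int.natAbs_pow]
  have h2 : Ideal.absNorm I = 2 := by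
    set n := Ideal.absNorm I
    have h3 : n ^ 2 ≤ 2 ^ 2 := hn ▸ Nat.pow_le_pow_right (by norm_num) hfr
    have h4 : n ≤ 2 := (Nat.pow_le_pow_iff_left (by norm_num)).1 h3
    have h5 : 2 ^ 1 ≤ n ^ 2 := hn ▸ Nat.pow_le_pow_right (by norm_num) hpos
    by_contra hne
    have h6 : n ≤ 1 := by omega
    nlinarith
  have hIp : I.IsPrime := Ideal.isPrime_of_irreducible_absNorm (by rw [h2]; exact Nat.prime_two)
  have hI0 : I ≠ ⊥ := by rintro h0; rw [h0] at h2; simp at h2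
  have hImax : I.IsMaximal := hIp.isMaximal hI0
  rw [Set.ncard_le_one (count1 Nat.prime_two).1]
  have key : ∀ v : HeightOneSpectrum (𝓞 K), ((2 : ℕ) : 𝓞 K) ∈ v.asIdeal → I = v.asIdeal := by
    intro v hv
    apply hImax.eq_of_le v.isPrime.ne_top
    apply v.isPrime.le_of_pow_le (n := 2)
    rw [← e, Ideal.span_singleton_le_iff_mem]; exact_mod_cast hv
  intro v hv w hw
  exact HeightOneSpectrum.ext ((key v hv).symm.trans (key w hw))

end
end QQ

namespace QQ
open NumberField IsDedekindDomain
set_option linter.unusedSectionVars false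
open scoped nonZeroDivisors Pointwise

section
variable {F K : Type*} [Field F] [NumberField F] [Field K] [NumberField K] [Algebra F K]

lemma coe_smul_gal (g : Gal(F/ℚ)) (x : 𝓞 F) : ((g • x : 𝓞 F) : F) = g (x : F) := rfl

lemma st5 {r : ℕ → F} {s : ℕ} (hM : MQ F {2, s} r) {p : ℕ} (hp : p.Prime) (hp8 : p % 8 = 5)
    (hps : ¬ p ∣ s) (hs2 : s ≠ 2)
    (hε : ((2 : ℕ) : ZMod p) ^ (p / 2) = -1) (hεs : (s : ZMod p) ^ (p / 2) = 1)
    {δ : K} (h : QE F K p δ) [IsTotallyReal F] [IsTotallyReal K] (hF : OddCl F)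
    {U : (𝓞 F)ˣ} {Y : 𝓞 F} (hUY : (U : 𝓞 F) * Y ^ 2 = 2)
    (hY : ∀ g : Gal(F/ℚ), g (r s) = r s → g • Y = Y) : OddCl K := by
  have := hM.isGalois
  have hodd : p ≠ 2 := by rintro rfl; omega
  obtain ⟨h1, h2⟩ := tp hM (by simp) hp hodd hε
  have hcard : ({2, s} : Finset ℕ).card = 2 := Finset.card_pair hs2.symm
  rw [hcard] at h2
  obtain ⟨R, hR, hR2⟩ := exists_int (hM.sq 2 (by simp))
  obtain ⟨W, hW, hW2⟩ := exists_int (hM.sq s (by simp))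
  have hY0 : Y ≠ 0 := by
    rintro rfl
    simp at hUY
  have hYF : (Y : F) ≠ 0 := by
    simpa using hY0
  have hz2 : ((R : F) / Y) ^ 2 = algebraMap (𝓞 F) F (U : 𝓞 F) := by
    rw [div_pow, div_eq_iff (pow_ne_zero 2 hYF), ← map_pow, hR2, ← map_pow, ← map_mul, hUY]
    simp
  have hi : IsIntegral ℤ ((R : F) / Y) := by
    apply IsIntegral.of_pow (n := 2) (by norm_num)
    rw [hz2]; exact RingOfIntegers.isIntegral_coe _
  obtain ⟨z, hz⟩ : ∃ z : 𝓞 F, (z : F) = (R : F) / Y := ⟨⟨_, hi⟩, rfl⟩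
  have hzU : z ^ 2 = (U : 𝓞 F) := by
    apply RingOfIntegers.coe_injective
    rw [map_pow, ← hz2, ← hz]
  have hzY : z * Y = R := by
    apply RingOfIntegers.coe_injective
    rw [map_mul]
    change (z : F) * (Y : F) = _
    rw [hz, div_mul_cancel₀ _ hYF]
  have hzu : IsUnit z := by
    rw [← isUnit_pow_iff (two_ne_zero), hzU]; exact U.isUnit
  refine corB h hF _ h1 (fun v hv => ?_) (by omega) (u := hzu.unit) ?_
  · refine unr2 h v (c := 1) (r := 1) (by simp) (by omega) ?_ hv
    rw [Nat.cast_one]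
    exact fun h => v.isPrime.ne_top ((Ideal.eq_top_iff_one _).2 h)
  · intro hu
    obtain ⟨a, b, y, hy, e⟩ := h.HH_eq hu
    obtain ⟨v, hv⟩ := exists_v (F := F) hp
    obtain ⟨g, hg, -⟩ := frob hp v hv
    have hl := val_ell hM hp hodd (by
      intro a ha
      simp only [Finset.mem_insert, Finset.mem_singleton] at ha
      rcases ha with rfl | rfl
      · exact fun hd => hodd ((Nat.prime_dvd_prime_iff_eq hp Nat.prime_two).1 hd)
      · exact hps) v hv
    have h5 := chi_HH hp hodd v hg (hM.invol g) hl hy e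
    have hgR : g • R = -R := frob_neg hp hodd v hv hg hR2 hε
    have hgW : g • W = W := frob_pos hp hodd v hv hg hW2 hεs
    have hgY : g • Y = Y := by
      apply hY
      rw [← hW, ← coe_smul_gal, hgW]
    have hgz : g • z = -z := by
      apply mul_right_cancel₀ hY0
      rw [← hgY, ← smul_mul', hgY, hzY, hgR, neg_mul, hzY]
    rw [IsUnit.unit_spec, hgz, map_neg, mul_neg, ← pow_two, ← map_pow, hzU] at h5
    have hev : Even (p / 2) := by rw [Nat.even_iff]; omega
    rw [hev.neg_pow] at h5
    have hY' : Y ∉ v.asIdeal := by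
      intro hYv
      have : (2 : 𝓞 F) * 1 ∈ v.asIdeal := by
        rw [mul_one, ← hUY]; exact v.asIdeal.mul_mem_left _ (Ideal.pow_mem_of_mem _ hYv 2 (by norm_num))
      exact two_mul_notMem hp hodd v hv (x := 1) (c := 1) (by simp)
        (fun hd => hp.one_lt.ne' (Nat.dvd_one.1 hd)) this
    have hφ : Ideal.Quotient.mk v.asIdeal Y ^ (2 * (p / 2)) = 1 := by
      have h0 : Ideal.Quotient.mk v.asIdeal Y ≠ 0 :=
        fun h => hY' (Ideal.Quotient.eq_zero_iff_mem.1 h)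
      have h6 := Ideal.Quotient.eq.2 (hg Y)
      rw [hgY, map_pow] at h6
      apply mul_left_cancel₀ h0
      rw [mul_one]
      conv_rhs => rw [h6]
      rw [← pow_succ']
      congr 1
      omega
    have h7 : (2 : 𝓞 F ⧸ v.asIdeal) ^ (p / 2) = 1 := by
      rw [show (2 : 𝓞 F ⧸ v.asIdeal) = Ideal.Quotient.mk v.asIdeal (U * Y ^ 2) by rw [hUY, map_ofNat],
        map_mul, mul_pow, h5, map_pow, ← pow_mul, hφ, one_mul]
    have h8 : (((2 : ℤ) ^ (p / 2) + 1 : ℤ) : 𝓞 F) ∈ v.asIdeal := by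
      rw [int_mem hp v hv]
      push_cast at hε ⊢
      rw [hε]; ring
    have h9 := Ideal.Quotient.eq_zero_iff_mem.2 h8
    push_cast at h9
    rw [map_add, map_pow, map_ofNat, map_one, h7] at h9
    apply neg_one_ne hp hodd v hv
    linear_combination -h9

lemma st6 {r : ℕ → F} {s p : ℕ} (hM : MQ F {2, s, p} r) {q : ℕ} (hq : q.Prime) (hq8 : q % 8 = 3)
    (hs4 : s % 4 = 3) (hqs : ¬ q ∣ s) (hqp : ¬ q ∣ p)
    (hε : ((2 : ℕ) : ZMod q) ^ (q / 2) = -1)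
    {δ : K} (h : QE F K q δ) [IsTotallyReal F] [IsTotallyReal K] (hF : OddCl F)
    {η : (𝓞 F)ˣ} {w R : 𝓞 F} (hR : R ^ 2 = ((2 : ℕ) : 𝓞 F)) {τ : Gal(F/ℚ)} (hτ : τ • R = R)
    (hη : (η : 𝓞 F) * τ • (η : 𝓞 F) = (1 + R) * w ^ 2) :
    Nat.card {c : ClassGroup (𝓞 K) // c ^ 2 = 1} ≤ 2 := by
  have := hM.isGalois
  have hodd : q ≠ 2 := by rintro rfl; omega
  obtain ⟨h1, h2⟩ := tp hM (by simp) hq hodd hε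
  have hcard : ({2, s, p} : Finset ℕ).card ≤ 3 := Finset.card_le_three
  have hpow : 2 ^ ({2, s, p} : Finset ℕ).card ≤ 2 ^ 3 := Nat.pow_le_pow_right (by norm_num) hcard
  have hu1 : (1 + R) * (R - 1) = 1 := by
    push_cast at hR; linear_combination hR
  obtain ⟨u, hu⟩ : ∃ u : (𝓞 F)ˣ, (u : 𝓞 F) = 1 + R :=
    ⟨⟨1 + R, R - 1, hu1, by rw [mul_comm]; exact hu1⟩, rfl⟩
  obtain ⟨v, hv⟩ := exists_v (F := F) hq
  obtain ⟨g, hg, -⟩ := frob hq v hv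
  have hl := val_ell hM hq hodd (by
      intro a ha
      simp only [Finset.mem_insert, Finset.mem_singleton] at ha
      rcases ha with rfl | rfl | rfl
      · exact fun hd => hodd ((Nat.prime_dvd_prime_iff_eq hq Nat.prime_two).1 hd)
      · exact hqs
      · exact hqp) v hv
  have hgR : g • R = -R := frob_neg hq hodd v hv hg hR hε
  -- the quadratic character
  let χ : 𝓞 F → 𝓞 F ⧸ v.asIdeal := fun x =>
    (Ideal.Quotient.mk v.asIdeal x * Ideal.Quotient.mk v.asIdeal (g • x)) ^ (q / 2)
  have χmul : ∀ x y, χ (x * y) = χ x * χ y := by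
    intro x y
    simp only [χ, smul_mul', map_mul]
    rw [← mul_pow]; congr 1; ring
  have χsq : ∀ x, x ∉ v.asIdeal → χ (x ^ 2) = 1 := by
    intro x hx
    rw [pow_two, χmul, ← frob_pow hq hodd v hg (hM.invol g) hx]
    simp only [χ]
    rw [← pow_add, two_mul]
  have hunit : ∀ x : (𝓞 F)ˣ, (x : 𝓞 F) ∉ v.asIdeal := fun x hx =>
    v.isPrime.ne_top (Ideal.eq_top_of_isUnit_mem _ hx x.isUnit)
  have hτu' : ∀ x : (𝓞 F)ˣ, ∃ x' : (𝓞 F)ˣ, (x' : 𝓞 F) = τ • (x : 𝓞 F) := fun x =>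
    ⟨Units.map (MulSemiringAction.toRingHom Gal(F/ℚ) (𝓞 F) τ : 𝓞 F →* 𝓞 F) x, rfl⟩
  have χu : χ (u : 𝓞 F) = -1 := by
    have hodd' : Odd (q / 2) := by rw [Nat.odd_iff]; omega
    have : (1 + R) * g • (1 + R) = -1 := by
      rw [smul_add, smul_one, hgR]; push_cast at hR; linear_combination -hR
    simp only [χ]
    rw [hu, ← map_mul, this, map_neg, map_one, hodd'.neg_one_pow]
  have hwv : w ∉ v.asIdeal := by
    intro hwv
    have h3 : (η : 𝓞 F) * τ • (η : 𝓞 F) ∈ v.asIdeal := by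
      rw [hη]; exact v.asIdeal.mul_mem_left _ (Ideal.pow_mem_of_mem _ hwv 2 (by norm_num))
    rcases v.isPrime.mem_or_mem h3 with h4 | h4
    · exact hunit _ h4
    · obtain ⟨η', hη'⟩ := hτu' η
      rw [← hη'] at h4
      exact hunit η' h4
  have χη : χ ((η : 𝓞 F) * τ • (η : 𝓞 F)) = -1 := by
    rw [hη, χmul, χsq w hwv, ← hu, χu, mul_one]
  have hne := neg_one_ne hq hodd v hv
  have χH : ∀ x : (𝓞 F)ˣ, x ∈ HH F K → χ x = 1 ∧ χ (τ • (x : 𝓞 F)) = 1 := by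
    intro x hx
    obtain ⟨a, b, y, hy, e⟩ := h.HH_eq hx
    refine ⟨chi_HH hq hodd v hg (hM.invol g) hl hy e, ?_⟩
    obtain ⟨x', hx'⟩ := hτu' x
    rw [← hx']
    refine chi_HH hq hodd v hg (hM.invol g) hl (u := x') (a := τ a) (b := τ b) (y := τ y)
      (by simpa using hy) ?_
    have := congrArg τ e
    simp only [map_mul, map_sub, map_pow, map_natCast] at this
    rw [hx']
    exact this
  refine corC h hF _ h1 (fun v' hv' => ?_) (by omega) (u := u) (w := η) ?_ ?_ ?_
  · by_cases h2v : (2 : 𝓞 F) ∈ v'.asIdeal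
    · refine unr2 h v' (hM.sq s (by simp)) ?_ ?_ hv'
      · rw [Nat.mul_mod, hs4, show q % 4 = 3 by omega]
      · intro hsv
        apply v'.isPrime.ne_top
        rw [Ideal.eq_top_iff_one]
        have h5 : (1 : 𝓞 F) = (s : 𝓞 F) - 2 * ((s / 2 : ℕ) : 𝓞 F) := by
          have : s = 2 * (s / 2) + 1 := by omega
          have := congrArg (Nat.cast (R := 𝓞 F)) this
          push_cast at this
          linear_combination -this
        rw [h5]
        exact v'.asIdeal.sub_mem hsv (v'.asIdeal.mul_mem_right _ h2v)
    · exact unr1 h v' h2v hv'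
  · intro hx
    have := (χH u hx).1
    rw [χu] at this; exact hne this
  · intro hx
    obtain ⟨h3, h4⟩ := χH η hx
    rw [χmul, h3, h4, mul_one] at χη
    exact hne χη.symm
  · intro hx
    obtain ⟨h3, h4⟩ := χH _ hx
    have hτu : τ • (u : 𝓞 F) = u := by rw [hu, smul_add, smul_one, hτ]
    rw [Units.val_mul] at h3 h4
    rw [smul_mul', hτu] at h4
    rw [χmul, χu] at h3 h4
    rw [χmul] at χη
    apply hne
    linear_combination -χη - χ (τ • (η : 𝓞 F)) * h3 + h4

end
end QQ

namespace QQ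
open NumberField IsDedekindDomain
set_option linter.unusedSectionVars false
open scoped nonZeroDivisors Pointwise

/-- the square root of `n` in `ℂ` -/
noncomputable def rt (n : ℕ) : ℂ := ((Real.sqrt n : ℝ) : ℂ)

lemma rt_sq (n : ℕ) : rt n ^ 2 = (n : ℂ) := by
  rw [rt, ← Complex.ofReal_pow, Real.sq_sqrt (Nat.cast_nonneg n), Complex.ofReal_natCast]

lemma rt_mul (m n : ℕ) : rt (m * n) = rt m * rt n := by
  rw [rt, rt, rt, ← Complex.ofReal_mul, Nat.cast_mul, Real.sqrt_mul (Nat.cast_nonneg m)]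

/-- the multiquadratic field attached to a finite set -/
noncomputable def EE (S : Finset ℕ) : IntermediateField ℚ ℂ :=
  IntermediateField.adjoin ℚ (rt '' (S : Set ℕ))

lemma rt_mem {S : Finset ℕ} {n : ℕ} (h : n ∈ S) : rt n ∈ EE S :=
  IntermediateField.subset_adjoin _ _ ⟨n, h, rfl⟩

lemma EE_mono {S T : Finset ℕ} (h : S ⊆ T) : EE S ≤ EE T :=
  IntermediateField.adjoin.mono _ _ _ (Set.image_mono (by exact_mod_cast h))

instance (S : Finset ℕ) : NumberField (EE S) where
  to_charZero := inferInstance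
  to_finiteDimensional := by
    have : Finite (rt '' (S : Set ℕ)) := (S.finite_toSet.image rt).to_subtype
    apply IntermediateField.finiteDimensional_adjoin
    rintro _ ⟨n, -, rfl⟩
    apply IsIntegral.of_pow (n := 2) (by norm_num)
    rw [rt_sq]
    exact_mod_cast isIntegral_algebraMap (R := ℚ) (A := ℂ) (x := (n : ℚ))

/-- generators -/
noncomputable def rE (S : Finset ℕ) (n : ℕ) : EE S := by
  classical exact if h : n ∈ S then ⟨rt n, rt_mem h⟩ else 0

lemma rE_coe {S : Finset ℕ} {n : ℕ} (h : n ∈ S) : (rE S n : ℂ) = rt n := by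
  simp [rE, h]

lemma rE_sq {S : Finset ℕ} {n : ℕ} (h : n ∈ S) : rE S n ^ 2 = (n : EE S) := by
  apply Subtype.ext
  push_cast
  rw [rE_coe h, rt_sq]

lemma mqE (S : Finset ℕ) : MQ (EE S) S (rE S) := by
  refine ⟨fun a ha => rE_sq ha, ?_⟩
  rw [eq_top_iff]
  rintro ⟨x, hx⟩ -
  induction hx using IntermediateField.adjoin_induction with
  | mem x hx =>
    obtain ⟨b, hb, rfl⟩ := hx
    apply IntermediateField.subset_adjoin
    exact ⟨b, hb, Subtype.ext (rE_coe hb)⟩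
  | algebraMap x =>
    have := IntermediateField.algebraMap_mem (IntermediateField.adjoin ℚ (rE S '' (S : Set ℕ))) x
    convert this
    apply Subtype.ext
    simp
  | add x y _ _ h1 h2 => exact add_mem h1 h2
  | mul x y _ _ h1 h2 => exact mul_mem h1 h2
  | inv x _ h1 => exact inv_mem h1

lemma spanE {S : Finset ℕ} {a : ℕ} {x : ℂ} (hx : x ∈ EE (insert a S)) :
    ∃ u ∈ EE S, ∃ v ∈ EE S, x = u + v * rt a := by
  have ha := rt_sq a
  have haE : (a : ℂ) ∈ EE S := natCast_mem _ a
  induction hx using IntermediateField.adjoin_induction with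
  | mem x hx =>
    obtain ⟨b, hb, rfl⟩ := hx
    rcases Finset.mem_insert.1 (Finset.mem_coe.1 hb) with rfl | hb
    · exact ⟨0, zero_mem _, 1, one_mem _, by ring⟩
    · exact ⟨rt b, rt_mem hb, 0, zero_mem _, by ring⟩
  | algebraMap x => exact ⟨_, (EE S).algebraMap_mem x, 0, zero_mem _, by ring⟩
  | add x y _ _ h1 h2 =>
    obtain ⟨u, hu, v, hv, rfl⟩ := h1
    obtain ⟨u', hu', v', hv', rfl⟩ := h2
    exact ⟨u + u', add_mem hu hu', v + v', add_mem hv hv', by ring⟩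
  | mul x y _ _ h1 h2 =>
    obtain ⟨u, hu, v, hv, rfl⟩ := h1
    obtain ⟨u', hu', v', hv', rfl⟩ := h2
    exact ⟨u * u' + v * v' * a, add_mem (mul_mem hu hu') (mul_mem (mul_mem hv hv') haE),
      u * v' + v * u', add_mem (mul_mem hu hv') (mul_mem hv hu'), by rw [← ha]; ring⟩
  | inv x _ h1 =>
    obtain ⟨u, hu, v, hv, rfl⟩ := h1
    by_cases h0 : u - v * rt a = 0
    · refine ⟨(u + u)⁻¹, inv_mem (add_mem hu hu), 0, zero_mem _, ?_⟩
      rw [zero_mul, add_zero]; congr 1; linear_combination -h0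
    by_cases h1 : u + v * rt a = 0
    · exact ⟨0, zero_mem _, 0, zero_mem _, by rw [h1]; simp⟩
    have hN : u ^ 2 - v ^ 2 * a ∈ EE S := sub_mem (pow_mem hu 2) (mul_mem (pow_mem hv 2) haE)
    have hN0 : u ^ 2 - v ^ 2 * a ≠ 0 := by
      have : u ^ 2 - v ^ 2 * a = (u - v * rt a) * (u + v * rt a) := by rw [← ha]; ring
      rw [this]; exact mul_ne_zero h0 h1
    refine ⟨u * (u ^ 2 - v ^ 2 * a)⁻¹, mul_mem hu (inv_mem hN), -v * (u ^ 2 - v ^ 2 * a)⁻¹,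
      mul_mem (neg_mem hv) (inv_mem hN), ?_⟩
    field_simp
    rw [← ha]; ring

lemma rt_notMem (S : Finset ℕ) : (∀ b ∈ S, b.Prime) → ∀ d : ℕ, Squarefree d → 1 < d →
    (∀ b ∈ S, ¬ b ∣ d) → rt d ∉ EE S := by
  induction S using Finset.induction_on with
  | empty =>
    intro _ d hd h1 _ hm
    rw [EE, Finset.coe_empty, Set.image_empty, IntermediateField.adjoin_empty,
      IntermediateField.mem_bot] at hm
    obtain ⟨x, hx⟩ := hm
    have h2 : ¬ IsSquare d := by
      rintro ⟨e, rfl⟩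
      have := hd e dvd_rfl
      rw [Nat.isUnit_iff] at this
      subst this; omega
    refine (irrational_sqrt_natCast_iff.2 h2) ⟨x, ?_⟩
    apply Complex.ofReal_injective
    rw [← rt, ← hx]; simp
  | insert a S haS ih =>
    intro hS d hd h1 hb hm
    have hS' : ∀ b ∈ S, b.Prime := fun b hb' => hS b (Finset.mem_insert_of_mem hb')
    have hb' : ∀ b ∈ S, ¬ b ∣ d := fun b hb' => hb b (Finset.mem_insert_of_mem hb')
    have hap : a.Prime := hS a (Finset.mem_insert_self _ _)
    have had : ¬ a ∣ d := hb a (Finset.mem_insert_self _ _)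
    have hba : ∀ b ∈ S, ¬ b ∣ a := by
      intro b hbS hba
      rw [Nat.prime_dvd_prime_iff_eq (hS' b hbS) hap] at hba
      exact haS (hba ▸ hbS)
    obtain ⟨u, hu, v, hv, e⟩ := spanE hm
    have haE : (a : ℂ) ∈ EE S := natCast_mem _ a
    have hdE : (d : ℂ) ∈ EE S := natCast_mem _ d
    have e2 : (d : ℂ) = u ^ 2 + a * v ^ 2 + 2 * u * v * rt a := by
      rw [← rt_sq d, ← rt_sq a, e]; ring
    by_cases hv0 : v = 0
    · apply ih hS' d hd h1 hb'
      rw [e, hv0]; simpa using hu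
    by_cases hu0 : u = 0
    · apply ih hS' (d * a)
      · exact (Nat.squarefree_mul ((Nat.Prime.coprime_iff_not_dvd hap).2 had).symm).2
          ⟨hd, hap.squarefree⟩
      · exact Nat.one_lt_mul_iff.2 ⟨by omega, hap.pos, Or.inl h1⟩
      · intro b hbS hbd
        rcases (hS' b hbS).dvd_mul.1 hbd with h | h
        · exact hb' b hbS h
        · exact hba b hbS h
      · have : rt (d * a) = v * a := by
          rw [rt_mul, e, hu0, ← rt_sq a]; ring
        rw [this]; exact mul_mem hv haE
    · apply ih hS' a hap.squarefree hap.one_lt hba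
      have : rt a = (d - u ^ 2 - a * v ^ 2) / (2 * u * v) := by
        field_simp; linear_combination -e2
      rw [this]
      exact div_mem (sub_mem (sub_mem hdE (pow_mem hu 2)) (mul_mem haE (pow_mem hv 2)))
        (mul_mem (mul_mem (ofNat_mem _ 2) hu) hv)

/-- the inclusion as an algebra -/
noncomputable abbrev algE {S T : Finset ℕ} (h : S ⊆ T) : Algebra (EE S) (EE T) :=
  (IntermediateField.inclusion (EE_mono h)).toRingHom.toAlgebra

lemma algE_coe {S T : Finset ℕ} (h : S ⊆ T) (x : EE S) :
    ((@algebraMap (EE S) (EE T) _ _ (algE h) x : EE T) : ℂ) = x :=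
  IntermediateField.coe_inclusion (EE_mono h) x

lemma qeE {S T : Finset ℕ} (h : S ⊆ T) {a : ℕ} (hT : T = insert a S) (hS : ∀ b ∈ T, b.Prime)
    (ha : a ∉ S) : letI := algE h; QE (EE S) (EE T) a (rE T a) := by
  letI := algE h
  have haT : a ∈ T := by rw [hT]; exact Finset.mem_insert_self _ _
  refine ⟨rE_sq haT, ?_, ?_⟩
  · intro y hy
    have hap := hS a haT
    have hy' : (y : ℂ) ^ 2 = rt a ^ 2 := by
      rw [rt_sq]
      have := congrArg (Subtype.val) hy
      push_cast at this
      exact this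
    refine rt_notMem S (fun b hb => hS b (h hb)) a hap.squarefree hap.one_lt ?_ ?_
    · intro b hbS hba
      rw [Nat.prime_dvd_prime_iff_eq (hS b (h hbS)) hap] at hba
      exact ha (hba ▸ hbS)
    · rcases sq_eq_sq_iff_eq_or_eq_neg.1 hy' with h1 | h1
      · rw [← h1]; exact y.2
      · rw [show rt a = - (y : ℂ) by rw [h1, neg_neg]]
        exact neg_mem y.2
  · rintro ⟨x, hx⟩
    have hx' := hx
    rw [hT] at hx'
    obtain ⟨u, hu, v, hv, e⟩ := spanE hx'
    refine ⟨⟨u, hu⟩, ⟨v, hv⟩, ?_⟩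
    apply Subtype.ext
    change x = u + v * (rE T a : ℂ)
    rw [rE_coe haT, e]

end QQ

namespace QQ
open NumberField IsDedekindDomain
set_option linter.unusedSectionVars false
open scoped nonZeroDivisors Pointwise

lemma two_pow_eq {p : ℕ} (hp : p.Prime) (h : p % 8 = 3 ∨ p % 8 = 5) :
    ((2 : ℕ) : ZMod p) ^ (p / 2) = -1 := by
  have := Fact.mk hp
  have h2 : p ≠ 2 := by omega
  have h0 : ((2 : ℕ) : ZMod p) ≠ 0 := by
    rw [Ne, ZMod.natCast_eq_zero_iff, Nat.prime_dvd_prime_iff_eq hp Nat.prime_two]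
    exact h2
  rcases ZMod.pow_div_two_eq_neg_one_or_one p h0 with h1 | h1
  · exfalso
    rw [← ZMod.euler_criterion p h0] at h1
    push_cast at h1
    rw [ZMod.exists_sq_eq_two_iff h2] at h1
    omega
  · exact h1

lemma s_pow_eq {p s : ℕ} (hp : p.Prime) (hs : s.Prime) (hps : p ≠ s) (hp4 : p % 4 = 1) (hs2 : s ≠ 2)
    (h : IsSquare (p : ZMod s)) : (s : ZMod p) ^ (p / 2) = 1 := by
  have := Fact.mk hp
  have := Fact.mk hs
  have h0 : (s : ZMod p) ≠ 0 := by
    rw [Ne, ZMod.natCast_eq_zero_iff, Nat.prime_dvd_prime_iff_eq hp hs]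
    exact hps
  rw [← ZMod.euler_criterion p h0]
  exact (ZMod.exists_sq_eq_prime_iff_of_mod_four_eq_one hp4 hs2).2 h

section
variable {F₀ F K : Type*} [Field F₀] [NumberField F₀] [Field F] [NumberField F] [Field K]
  [NumberField K] [Algebra F₀ F] [Algebra F K]

lemma step5 {r₀ : ℕ → F₀} {r : ℕ → F} {s : ℕ} (hM₀ : MQ F₀ {s} r₀) (hM : MQ F {2, s} r)
    (hr : algebraMap F₀ F (r₀ s) = r s) (hs4 : s % 4 = 3) {p : ℕ} (hp : p.Prime) (hp8 : p % 8 = 5)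
    (hps : ¬ p ∣ s) (hεs : (s : ZMod p) ^ (p / 2) = 1) {δ : K} (h : QE F K p δ)
    [IsTotallyReal F] [IsTotallyReal K] (hF₀ : OddCl F₀) (hF : OddCl F) : OddCl K := by
  obtain ⟨u, y, huy⟩ := two_unit hM₀ hs4 hF₀
  let φ : 𝓞 F₀ →+* 𝓞 F := RingOfIntegers.mapRingHom (algebraMap F₀ F)
  refine st5 hM hp hp8 hps (by omega) (two_pow_eq hp (Or.inr hp8)) hεs h hF
    (U := Units.map (φ : 𝓞 F₀ →* 𝓞 F) u) (Y := φ y) ?_ ?_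
  · have := congrArg φ huy
    rw [map_mul, map_pow, map_ofNat] at this
    exact this
  · intro g hg
    apply RingOfIntegers.coe_injective
    change g (algebraMap F₀ F (y : F₀)) = algebraMap F₀ F (y : F₀)
    have := hM₀.ext_hom (f := ((g : F →ₐ[ℚ] F).comp (algebraMap F₀ F).toRatAlgHom))
      (g := (algebraMap F₀ F).toRatAlgHom) (by
        intro a ha
        rw [Finset.mem_singleton] at ha
        subst ha
        change g (algebraMap F₀ F (r₀ a)) = algebraMap F₀ F (r₀ a)
        rw [hr, hg])
    exact DFunLike.congr_fun this (y : F₀)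

variable {A B C : Type*} [Field A] [NumberField A] [Field B] [NumberField B] [Field C]
  [NumberField C] [Algebra A B] [Algebra B F] [Algebra C F]

lemma step6 {r₂ : ℕ → A} (hMA : MQ A {2} r₂) (hA : OddCl A) {p q s : ℕ} (hp : p.Prime)
    (hp8 : p % 8 = 5) {δ₁ : B} (hB : QE A B p δ₁) {δ₂ : F} (hC : QE C F p δ₂)
    (hδ : algebraMap B F δ₁ = δ₂)
    (hAC : ∀ x : A, ∃ y : C, algebraMap B F (algebraMap A B x) = algebraMap C F y)
    {r : ℕ → F} (hM : MQ F {2, s, p} r) (hq : q.Prime) (hq8 : q % 8 = 3)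
    (hs4 : s % 4 = 3) (hqs : ¬ q ∣ s) (hqp : ¬ q ∣ p)
    {δ : K} (h : QE F K q δ) [IsTotallyReal A] [IsTotallyReal B] [IsTotallyReal F] [IsTotallyReal K]
    (hF : OddCl F) :
    Nat.card {c : ClassGroup (𝓞 K) // c ^ 2 = 1} ≤ 2 := by
  obtain ⟨hOB, htop⟩ := st2 hMA hp (by omega) (two_pow_eq hp (Or.inr hp8)) hB hA
  obtain ⟨R, -, hR⟩ := exists_int (hMA.sq 2 (by simp))
  have hu1 : (1 + R) * (R - 1) = 1 := by
    push_cast at hR; linear_combination hR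
  obtain ⟨u, hu⟩ : ∃ u : (𝓞 A)ˣ, (u : 𝓞 A) = 1 + R :=
    ⟨⟨1 + R, R - 1, hu1, by rw [mul_comm]; exact hu1⟩, rfl⟩
  obtain ⟨η, a, b, y, hy, hη, e⟩ := hB.unit_of_top hOB (u := u) (by rw [htop]; trivial)
  obtain ⟨σ, hσ⟩ := hC.exists_sigma
  let τ : Gal(F/ℚ) := AlgEquiv.ofRingEquiv (f := (σ : F ≃+* F)) (fun x => by simp)
  have hτA : ∀ x : A, τ (algebraMap B F (algebraMap A B x)) = algebraMap B F (algebraMap A B x) := by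
    intro x
    obtain ⟨z, hz⟩ := hAC x
    rw [hz]
    exact σ.commutes z
  have hτδ : τ (algebraMap B F δ₁) = - algebraMap B F δ₁ := by
    rw [hδ]; exact hσ
  let φ : 𝓞 A →+* 𝓞 B := RingOfIntegers.mapRingHom (algebraMap A B)
  let ψ : 𝓞 B →+* 𝓞 F := RingOfIntegers.mapRingHom (algebraMap B F)
  let η' : (𝓞 F)ˣ := Units.map (ψ : 𝓞 B →* 𝓞 F) η
  let u' : (𝓞 F)ˣ := Units.map ((ψ.comp φ : 𝓞 A →+* 𝓞 F) : 𝓞 A →* 𝓞 F) u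
  let w : F := algebraMap B F (algebraMap A B y)
  obtain ⟨η'', hη''⟩ : ∃ x : (𝓞 F)ˣ, (x : 𝓞 F) = τ • (η' : 𝓞 F) :=
    ⟨Units.map (MulSemiringAction.toRingHom Gal(F/ℚ) (𝓞 F) τ : 𝓞 F →* 𝓞 F) η', rfl⟩
  have hη1 : ((η' : 𝓞 F) : F) = algebraMap B F (η : B) := rfl
  have hη2 : ((η'' : 𝓞 F) : F) = τ (algebraMap B F (η : B)) := by rw [hη'']; rfl
  have hu2 : ((u' : 𝓞 F) : F) = algebraMap B F (algebraMap A B (u : A)) := rfl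
  have e2 : ((η' : 𝓞 F) : F) * ((η'' : 𝓞 F) : F) = ((u' : 𝓞 F) : F) * w ^ 2 := by
    have := congrArg (fun x => algebraMap B F (algebraMap A B x)) e
    simp only [map_mul, map_sub, map_pow, map_natCast] at this
    rw [hu2, this, hη1, hη2, hη]
    simp only [map_mul, map_add, hτA, hτδ]
    have h3 := congrArg (algebraMap B F) hB.sq
    rw [map_pow, map_natCast] at h3
    rw [← h3]; ring
  have hwi : IsIntegral ℤ w := by
    apply IsIntegral.of_pow (n := 2) (by norm_num)
    have : w ^ 2 = algebraMap (𝓞 F) F (((u'⁻¹ : (𝓞 F)ˣ) : 𝓞 F) * η' * η'') := by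
      rw [map_mul, map_mul]
      have h4 : algebraMap (𝓞 F) F ((u'⁻¹ : (𝓞 F)ˣ) : 𝓞 F) * algebraMap (𝓞 F) F (u' : 𝓞 F) = 1 := by
        rw [← map_mul, Units.inv_mul, map_one]
      linear_combination (-(algebraMap (𝓞 F) F ((u'⁻¹ : (𝓞 F)ˣ) : 𝓞 F))) * e2 - w ^ 2 * h4
    rw [this]
    exact RingOfIntegers.isIntegral_coe _
  obtain ⟨w', hw'⟩ : ∃ x : 𝓞 F, algebraMap (𝓞 F) F x = w := ⟨⟨w, hwi⟩, rfl⟩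
  refine st6 hM hq hq8 hs4 hqs hqp (two_pow_eq hq (Or.inl hq8)) h hF (η := η')
    (w := w') (R := ψ (φ R)) (τ := τ) ?_ ?_ ?_
  · rw [← map_pow, ← map_pow, hR, map_natCast, map_natCast]
  · apply RingOfIntegers.coe_injective
    exact hτA (R : A)
  · rw [← hη'']
    have h5 : (u' : 𝓞 F) = 1 + ψ (φ R) := by
      change ψ (φ (u : 𝓞 A)) = _
      rw [hu, map_add, map_add, map_one, map_one]
    rw [← h5]
    apply RingOfIntegers.coe_injective
    rw [map_mul, map_mul, map_pow, hw']
    exact e2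
end

lemma main {p q s : ℕ} (hp : p.Prime) (hq : q.Prime) (hs : s.Prime)
    (hpq : p ≠ q) (hps : p ≠ s) (hqs : q ≠ s)
    (hp8 : p % 8 = 5) (hq8 : q % 8 = 3) (hs4 : s % 4 = 3) (hQRs : IsSquare (p : ZMod s)) :
    Nat.card {c : ClassGroup (𝓞 (EE {2, s, p, q})) // c ^ 2 = 1} ≤ 2 := by
  have hTR : ∀ S, IsTotallyReal (EE S) := fun S => (mqE S).totallyReal
  have hp2 : p ≠ 2 := by omega
  have hq2 : q ≠ 2 := by omega
  have hs2 : s ≠ 2 := by omega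
  have hqs' : ¬ q ∣ s := fun hd => hqs ((Nat.prime_dvd_prime_iff_eq hq hs).1 hd)
  have hqp' : ¬ q ∣ p := fun hd => hpq ((Nat.prime_dvd_prime_iff_eq hq hp).1 hd).symm
  have hps' : ¬ p ∣ s := fun hd => hps ((Nat.prime_dvd_prime_iff_eq hp hs).1 hd)
  have hpr : ∀ b ∈ ({2, s, p, q} : Finset ℕ), b.Prime := by
    intro b hb
    simp only [Finset.mem_insert, Finset.mem_singleton] at hb
    rcases hb with rfl | rfl | rfl | rfl
    · exact Nat.prime_two
    all_goals assumption
  have i1 : (∅ : Finset ℕ) ⊆ {2} := by simp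
  have i2 : (∅ : Finset ℕ) ⊆ {s} := by simp
  have i3 : ({2} : Finset ℕ) ⊆ {2, p} := by intro x; simp; tauto
  have i4 : ({s} : Finset ℕ) ⊆ {2, s} := by intro x; simp; tauto
  have i5 : ({2, s} : Finset ℕ) ⊆ {2, s, p} := by intro x; simp; tauto
  have i6 : ({2, p} : Finset ℕ) ⊆ {2, s, p} := by intro x; simp; tauto
  have i7 : ({2, s, p} : Finset ℕ) ⊆ {2, s, p, q} := by intro x; simp; tauto
  have j2 : ({2, p} : Finset ℕ) ⊆ {2, s, p, q} := i6.trans i7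
  have j3 : ({2, s} : Finset ℕ) ⊆ {2, s, p, q} := i5.trans i7
  letI a1 := algE i1
  letI a2 := algE i2
  letI a3 := algE i3
  letI a4 := algE i4
  letI a5 := algE i5
  letI a6 := algE i6
  letI a7 := algE i7
  have h1 : QE (EE ∅) (EE {2}) 2 (rE {2} 2) :=
    qeE i1 (by ext; simp) (fun b hb => hpr b (j2 (i3 hb))) (by simp)
  have h2 : QE (EE ∅) (EE {s}) s (rE {s} s) :=
    qeE i2 (by ext; simp) (fun b hb => hpr b (j3 (i4 hb))) (by simp)
  have h3 : QE (EE {2}) (EE {2, p}) p (rE {2, p} p) :=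
    qeE i3 (by ext; simp; tauto) (fun b hb => hpr b (j2 hb)) (by simpa using hp2)
  have h4 : QE (EE {s}) (EE {2, s}) 2 (rE {2, s} 2) :=
    qeE i4 (by ext; simp) (fun b hb => hpr b (j3 hb)) (by simpa using hs2.symm)
  have h5 : QE (EE {2, s}) (EE {2, s, p}) p (rE {2, s, p} p) :=
    qeE i5 (by ext; simp; tauto) (fun b hb => hpr b (i7 hb)) (by simp; tauto)
  have h7 : QE (EE {2, s, p}) (EE {2, s, p, q}) q (rE {2, s, p, q} q) :=
    qeE i7 (by ext; simp; tauto) hpr (by simp; tauto)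
  have O0 : OddCl (EE ∅) := st0 (mqE ∅)
  have O2 : OddCl (EE {2}) := by
    have := (mqE ∅).isGalois
    have hc := count1 (F := EE ∅) Nat.prime_two
    refine adj2 h1 O0 hc.1 (hc.2.trans ?_)
    simpa using (mqE ∅).finrank_le
  have Os : OddCl (EE {s}) := st3 (mqE ∅) hs hs4 h2 O0
  have hc := two_count (mqE {s}) hs4
  have O2s : OddCl (EE {2, s}) := adj2 h4 Os hc.1 hc.2
  have O2sp : OddCl (EE {2, s, p}) := by
    refine step5 (mqE {s}) (mqE {2, s}) ?_ hs4 hp hp8 hps'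
      (s_pow_eq hp hs hps (by omega) hs2 hQRs) h5 Os O2s
    apply Subtype.ext
    rw [algE_coe i4, rE_coe (by simp), rE_coe (by simp)]
  refine step6 (mqE {2}) O2 hp hp8 h3 h5 ?_ ?_ (mqE {2, s, p}) hq hq8 hs4 hqs' hqp' h7 O2sp
  · apply Subtype.ext
    rw [algE_coe i6, rE_coe (by simp), rE_coe (by simp)]
  · intro x
    refine ⟨⟨(x : ℂ), EE_mono (by simp) x.2⟩, ?_⟩
    apply Subtype.ext
    rw [algE_coe i6, algE_coe i3, algE_coe i5]

end QQ

theorem two_class_group_cyclic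
    (p q s : ℕ) (hp : p.Prime) (hq : q.Prime) (hs : s.Prime)
    (hpq : p ≠ q) (hps : p ≠ s) (hqs : q ≠ s)
    (hp8 : p % 8 = 5) (hq8 : q % 8 = 3) (hs4 : s % 4 = 3)
    (hQRq : IsSquare (p : ZMod q)) (hQRs : IsSquare (p : ZMod s)) :
    ∀ P : Sylow 2 (ClassGroup (𝓞 (quadquad p q s))),
      IsCyclic (P : Subgroup (ClassGroup (𝓞 (quadquad p q s)))) := by
  have hK : quadquad p q s = QQ.EE {2, s, p, q} := by
    rw [quadquad, QQ.EE]
    congr 1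
    ext x
    simp only [Set.mem_insert_iff, Set.mem_singleton_iff, Finset.coe_insert, Finset.coe_singleton,
      Set.image_insert_eq, Set.image_singleton, QQ.rt, Nat.cast_ofNat]
    tauto
  rw [hK]
  exact fun P => QQ.sylow_cyclic (QQ.main hp hq hs hpq hps hqs hp8 hq8 hs4 hQRs) P
end

section
/- Let G be a finite 2-group whose abelianization is isomorphic to ℤ/2ℤ × ℤ/2ℤ. Then G is isomorphic to one of: ℤ/2ℤ × ℤ/2ℤ, a generalized quaternion group Q_{2^m} (m ≥ 3), a dihedral group D_{2^m} (m ≥ 3), or a semidihedral group S_{2^m} (m ≥ 4). -/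
/-- Relations of the semidihedral group of order `2 ^ m`:
`r ^ (2 ^ (m-1)) = 1`, `a ^ 2 = 1`, `a r a⁻¹ = r ^ (2 ^ (m-2) - 1)`. -/
def semidihedralRels (m : ℕ) : Set (FreeGroup (Fin 2)) :=
  {FreeGroup.of 0 ^ 2 ^ (m - 1), FreeGroup.of 1 ^ 2,
   FreeGroup.of 1 * FreeGroup.of 0 * (FreeGroup.of 1)⁻¹ *
     (FreeGroup.of 0 ^ (2 ^ (m - 2) - 1))⁻¹}

/-- The semidihedral group of order `2 ^ m`, as a presented group. -/
def SemidihedralGroup (m : ℕ) : Type := PresentedGroup (semidihedralRels m)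

instance (m : ℕ) : Group (SemidihedralGroup m) :=
  inferInstanceAs (Group (PresentedGroup (semidihedralRels m)))

universe u

/-- Fixed points of an outer element on an abelian subgroup of index two. -/
lemma fixed_two {G : Type*} [Group G] [Finite G] (h4 : (commutator G).index = 4)
    (M : Subgroup G) (hM : M.index = 2) (hc : ∀ a ∈ M, ∀ b ∈ M, a * b = b * a)
    (b : G) (hb : b ∉ M) (u v : G) (hu : u ∈ M) (hv : v ∈ M) (hub : b * u = u * b)
    (hvb : b * v = v * b) (hu1 : u ≠ 1) : v = 1 ∨ v = u := by
  have hN : M.Normal := Subgroup.normal_of_index_eq_two hM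
  have hconj : ∀ m ∈ M, b * m * b⁻¹ ∈ M := fun m hm => hN.conj_mem m hm b
  let φ : M →* G :=
    { toFun := fun m => m * (b * (m : G)⁻¹ * b⁻¹)
      map_one' := by simp
      map_mul' := by
        rintro ⟨m, hm⟩ ⟨n, hn⟩
        have e1 := hc n hn _ (hconj _ (M.inv_mem hm))
        have e2 := hc (n⁻¹) (M.inv_mem hn) _ (M.inv_mem hm)
        simp only [Subgroup.coe_mul, mul_inv_rev]
        calc m * n * (b * (n⁻¹ * m⁻¹) * b⁻¹)
            = m * n * (b * (m⁻¹ * n⁻¹) * b⁻¹) := by rw [e2]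
          _ = m * (n * (b * m⁻¹ * b⁻¹)) * (b * n⁻¹ * b⁻¹) := by group
          _ = _ := by rw [e1]; group }
  have hφ : ∀ m (hm : m ∈ M), m * (b * m⁻¹ * b⁻¹) ∈ φ.range := fun m hm => ⟨⟨m, hm⟩, rfl⟩
  have hdec : ∀ g : G, g ∈ M ∨ ∃ m ∈ M, g = m * b := by
    intro g
    by_cases hg : g ∈ M
    · exact Or.inl hg
    · refine Or.inr ⟨g * b⁻¹, ?_, by group⟩
      rw [Subgroup.mul_mem_iff_of_index_two hM]
      simp [hg, hb]
  have hle : commutator G ≤ φ.range := by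
    rw [commutator_def, Subgroup.commutator_le]
    rintro g - k -
    rw [commutatorElement_def]
    rcases hdec g with hg | ⟨m, hm, rfl⟩ <;> rcases hdec k with hk | ⟨n, hn, rfl⟩
    · rw [hc g hg k hk]; simp
    · have := hc (b * g⁻¹ * b⁻¹) (hconj _ (M.inv_mem hg)) n⁻¹ (M.inv_mem hn)
      have e : g * (n * b) * g⁻¹ * (n * b)⁻¹ = g * (b * g⁻¹ * b⁻¹) := by
        calc _ = g * n * ((b * g⁻¹ * b⁻¹) * n⁻¹) := by group
          _ = _ := by rw [this]; group
      rw [e]; exact hφ g hg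
    · have := hc (b * k * b⁻¹) (hconj _ hk) m (hm)
      have e : (m * b) * k * (m * b)⁻¹ * k⁻¹ = (k * (b * k⁻¹ * b⁻¹))⁻¹ := by
        calc _ = m * (b * k * b⁻¹) * m⁻¹ * k⁻¹ := by group
          _ = _ := by rw [← this]; group
      rw [e]; exact inv_mem (hφ k hk)
    · have := hc n⁻¹ (M.inv_mem hn) (b * (n * m⁻¹) * b⁻¹)
        (hconj _ (M.mul_mem hn (M.inv_mem hm)))
      have e : (m * b) * (n * b) * (m * b)⁻¹ * (n * b)⁻¹
          = (m * n⁻¹) * (b * (m * n⁻¹)⁻¹ * b⁻¹) := by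
        calc _ = m * ((b * (n * m⁻¹) * b⁻¹) * n⁻¹) := by group
          _ = _ := by rw [← this]; group
      rw [e]; exact hφ _ (M.mul_mem hm (M.inv_mem hn))
  have c1 : Nat.card (commutator G) * 4 = Nat.card G := h4 ▸ Subgroup.card_mul_index _
  have c2 : Nat.card M * 2 = Nat.card G := hM ▸ Subgroup.card_mul_index _
  have c3 : Nat.card φ.ker * Nat.card φ.range = Nat.card M := by
    rw [← Subgroup.index_ker]; exact Subgroup.card_mul_index _
  have c4 : Nat.card (commutator G) ≤ Nat.card φ.range := Subgroup.card_le_of_le hle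
  have c5 : Nat.card φ.ker ≤ 2 := by
    have hpos : 0 < Nat.card φ.range := Nat.card_pos
    by_contra hlt
    have : 3 * Nat.card φ.range ≤ Nat.card φ.ker * Nat.card φ.range :=
      Nat.mul_le_mul_right _ (by omega)
    omega
  have hk : ∀ m (hm : m ∈ M), b * m = m * b → (⟨m, hm⟩ : M) ∈ φ.ker := by
    intro m hm hbm
    rw [MonoidHom.mem_ker]
    change m * (b * m⁻¹ * b⁻¹) = 1
    have : b * m⁻¹ * b⁻¹ = m⁻¹ := by
      have hcm : Commute b m := hbm
      rw [mul_inv_eq_iff_eq_mul]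
      exact hcm.inv_right.eq
    rw [this]; simp
  by_contra! hne
  have hcard : Nat.card (Fin 3) ≤ Nat.card φ.ker := by
    refine Nat.card_le_card_of_injective
      (![⟨1, one_mem _⟩, ⟨⟨u, hu⟩, hk u hu hub⟩, ⟨⟨v, hv⟩, hk v hv hvb⟩] : Fin 3 → φ.ker) ?_
    intro i j hij
    fin_cases i <;> fin_cases j <;> simp [Subtype.ext_iff] at hij ⊢ <;>
      first
      | exact hu1 hij | exact hne.1 hij | exact hne.2 hij | exact hu1 hij.symm
      | exact hne.1 hij.symm | exact hne.2 hij.symm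
  rw [Nat.card_fin] at hcard
  omega

lemma exists_central_involution {G : Type*} [Group G] [Finite G] (hG : IsPGroup 2 G)
    (H : Subgroup G) [H.Normal] (hH : H ≠ ⊥) :
    ∃ z ∈ H, z ^ 2 = 1 ∧ z ≠ 1 ∧ ∀ g, g * z = z * g := by
  have hd : 2 ∣ Nat.card H := by
    rcases (hG.to_subgroup H).card_eq_or_dvd with h | h
    · exact absurd (Subgroup.card_eq_one.1 h) hH
    · exact h
  have hne : (H ⊓ Subgroup.center G) ≠ ⊥ := by
    obtain ⟨c, hc, hc1⟩ := (hG.of_equiv ConjAct.toConjAct).exists_fixed_point_of_prime_dvd_card_of_fixed_point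
      (α := H) hd (a := 1) (by intro g; simp)
    intro hbot
    have : (c : G) ∈ H ⊓ Subgroup.center G := by
      refine ⟨c.2, ?_⟩
      apply Subgroup.mem_center_iff.2
      intro g
      have := congrArg (Subtype.val) (hc (ConjAct.toConjAct g))
      rw [ConjAct.Subgroup.val_conj_smul, ConjAct.toConjAct_smul] at this
      exact mul_inv_eq_iff_eq_mul.1 this
    rw [hbot, Subgroup.mem_bot] at this
    exact hc1 (Subtype.ext this.symm)
  have hd2 : 2 ∣ Nat.card (H ⊓ Subgroup.center G : Subgroup G) := by
    rcases (hG.to_subgroup (H ⊓ Subgroup.center G)).card_eq_or_dvd with h | h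
    · exact absurd (Subgroup.card_eq_one.1 h) hne
    · exact h
  obtain ⟨⟨z, hz⟩, hz2⟩ := exists_prime_orderOf_dvd_card' 2 hd2
  rw [Subgroup.orderOf_mk] at hz2
  refine ⟨z, hz.1, hz2 ▸ pow_orderOf_eq_one z, ?_, Subgroup.mem_center_iff.1 hz.2⟩
  rintro rfl
  simp at hz2

lemma index_zpowers_of_card {G : Type*} [Group G] [Finite G] (x : G)
    (h : Nat.card G = 2 * orderOf x) : (Subgroup.zpowers x).index = 2 := by
  have h1 := Subgroup.card_mul_index (Subgroup.zpowers x)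
  rw [Nat.card_zpowers, h, mul_comm] at h1
  exact Nat.eq_of_mul_eq_mul_right (orderOf_pos x) h1

lemma commutator_bot_of_comm {G : Type*} [Group G] (h : ∀ a b : G, a * b = b * a) :
    commutator G = ⊥ := by
  rw [eq_bot_iff, commutator_def, Subgroup.commutator_le]
  rintro g - k -
  rw [commutatorElement_def, h g k]; simp

lemma order_eight {G : Type*} [Group G] [Finite G] (h8 : Nat.card G = 8)
    (hne : commutator G ≠ ⊥) : ∃ x : G, (Subgroup.zpowers x).index = 2 := by
  by_cases hall : ∀ g : G, g ^ 2 = 1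
  · refine absurd (commutator_bot_of_comm fun a b => ?_) hne
    exact Commute.of_orderOf_dvd_two (fun g => orderOf_dvd_of_pow_eq_one (hall g)) a b
  · push Not at hall
    obtain ⟨g, hg⟩ := hall
    have hd : orderOf g ∣ 2 ^ 3 := by
      have := orderOf_dvd_natCard g; rwa [h8] at this
    obtain ⟨k, hk, hk2⟩ := (Nat.dvd_prime_pow Nat.prime_two).1 hd
    have hnd : ¬ orderOf g ∣ 2 := fun h => hg (orderOf_dvd_iff_pow_eq_one.1 h)
    interval_cases k
    · exact absurd (hk2 ▸ by norm_num) hnd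
    · exact absurd (hk2 ▸ by norm_num) hnd
    · exact ⟨g, index_zpowers_of_card g (by rw [h8, hk2]; norm_num)⟩
    · refine ⟨g ^ 2, index_zpowers_of_card _ ?_⟩
      rw [orderOf_pow, hk2, h8]; norm_num

lemma exists_cyclic_index_two : ∀ (n : ℕ) (G : Type u) [Group G] [Finite G], Nat.card G = n →
    IsPGroup 2 G → (commutator G).index = 4 → ∃ x : G, (Subgroup.zpowers x).index = 2 := by
  intro n
  induction n using Nat.strong_induction_on with
  | _ n ih =>
  intro G _ _ hn hG h4
  have c1 : Nat.card (commutator G) * 4 = Nat.card G := h4 ▸ Subgroup.card_mul_index _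
  by_cases hbot : commutator G = ⊥
  · rw [hbot, Subgroup.card_bot] at c1
    obtain ⟨x, hx⟩ := exists_prime_orderOf_dvd_card' (G := G) 2 (by rw [← c1]; norm_num)
    exact ⟨x, index_zpowers_of_card x (by rw [hx, ← c1])⟩
  obtain ⟨z, hzc, hz2, hz1, hzz⟩ := exists_central_involution hG (commutator G) hbot
  have hZN : (Subgroup.zpowers z).Normal := by
    constructor
    intro m hm g
    obtain ⟨k, rfl⟩ := hm
    have : Commute g z := hzz g
    have h2 := (this.zpow_right k).eq
    simp only at h2 ⊢
    rw [h2]; simp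
  have hoz : orderOf z = 2 := orderOf_eq_prime hz2 hz1
  have hmemz : ∀ g ∈ Subgroup.zpowers z, g = 1 ∨ g = z := by
    rintro g ⟨k, rfl⟩
    rcases Int.even_or_odd' k with ⟨j, rfl | rfl⟩
    · left; simp only; rw [zpow_mul]; norm_cast; rw [hz2]; simp
    · right; simp only; rw [zpow_add, zpow_mul]; norm_cast; rw [hz2]; simp
  let Q := G ⧸ Subgroup.zpowers z
  let π : G →* Q := QuotientGroup.mk' (Subgroup.zpowers z)
  have hπs : Function.Surjective π := QuotientGroup.mk'_surjective _
  have hπ1 : ∀ g, π g = 1 → g = 1 ∨ g = z := fun g hg =>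
    hmemz g ((QuotientGroup.eq_one_iff g).1 hg)
  have hπz : π z = 1 := (QuotientGroup.eq_one_iff z).2 (Subgroup.mem_zpowers z)
  have hcQ : Nat.card G = Nat.card Q * 2 := by
    rw [Subgroup.card_eq_card_quotient_mul_card_subgroup (Subgroup.zpowers z),
      Nat.card_zpowers, hoz]
  have hQpos : 0 < Nat.card Q := Nat.card_pos
  have hQ4 : (commutator Q).index = 4 := by
    have : commutator Q = (commutator G).map π := by
      rw [commutator_def, commutator_def, Subgroup.map_commutator,
        Subgroup.map_top_of_surjective π hπs]
    rw [this, Subgroup.index_map_eq _ hπs, h4]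
    rw [QuotientGroup.ker_mk']
    exact (Subgroup.zpowers_le).2 hzc
  obtain ⟨xq, hxq⟩ := ih (Nat.card Q) (by omega) Q rfl (hG.to_quotient _) hQ4
  obtain ⟨x, rfl⟩ := hπs xq
  set o := orderOf (π x) with ho
  have hco : Nat.card Q = o * 2 := by
    rw [← Subgroup.card_mul_index (Subgroup.zpowers (π x)), hxq, Nat.card_zpowers]
  let M : Subgroup G := (Subgroup.zpowers (π x)).comap π
  have hMi : M.index = 2 := by
    rw [Subgroup.index_comap_of_surjective _ hπs, hxq]
  have hMdec : ∀ m ∈ M, ∃ i : ℤ, m = x ^ i ∨ m = x ^ i * z := by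
    intro m hm
    obtain ⟨i, hi⟩ := (Subgroup.mem_comap.1 hm)
    refine ⟨i, ?_⟩
    simp only at hi
    rcases hπ1 ((x ^ i)⁻¹ * m) (by rw [map_mul, map_inv, map_zpow, hi]; simp) with h | h
    · left; exact (inv_mul_eq_one.1 h).symm
    · right; rw [← h]; group
  have hxM : x ∈ M := Subgroup.mem_comap.2 (Subgroup.mem_zpowers _)
  have hzM : z ∈ M := by
    rw [Subgroup.mem_comap, hπz]; exact one_mem _
  have hxo : π (x ^ o) = 1 := by rw [map_pow, ho, pow_orderOf_eq_one]
  rcases hπ1 _ hxo with hx1 | hxz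
  · -- the noncyclic case
    obtain ⟨k, hk⟩ := (IsPGroup.iff_card).1 (hG.to_quotient (Subgroup.zpowers z))
    change Nat.card Q = _ at hk
    have hob : o ∣ 2 ^ k := ⟨2, by rw [← hk, hco]⟩
    obtain ⟨j, -, hj⟩ := (Nat.dvd_prime_pow Nat.prime_two).1 hob
    match j, hj with
    | 0, hj =>
      exfalso
      apply hbot
      apply Subgroup.card_eq_one.1
      omega
    | 1, hj => exact order_eight (by omega) hbot
    | j + 2, hj =>
      exfalso
      set t := 2 ^ (j + 1) with ht
      have htpos : 0 < t := by positivity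
      have hot : o = t * 2 := by rw [hj, ht]; ring
      have hMc : ∀ a ∈ M, ∀ b ∈ M, a * b = b * a := by
        have hxz : Commute x z := hzz x
        have key : ∀ a ∈ M, Commute a x := by
          intro a ha
          obtain ⟨i, rfl | rfl⟩ := hMdec a ha
          · exact (Commute.refl x).zpow_left i
          · exact ((Commute.refl x).zpow_left i).mul_left hxz.symm
        intro a ha b hb
        obtain ⟨i, rfl | rfl⟩ := hMdec b hb
        · exact (key a ha).zpow_right i
        · exact ((key a ha).zpow_right i).mul_right (hzz a)
      obtain ⟨b, hb⟩ : ∃ b, b ∉ M := by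
        by_contra! hall
        have : M = ⊤ := (Subgroup.eq_top_iff' M).2 hall
        rw [this] at hMi; simp at hMi
      have hπu : π (x ^ t) ≠ 1 := by
        rw [map_pow]
        exact pow_ne_one_of_lt_orderOf (by omega) (by omega)
      have hu1 : x ^ t ≠ 1 := fun h => hπu (by rw [h, map_one])
      have hMN : M.Normal := Subgroup.normal_of_index_eq_two hMi
      have hzt : z ^ t = 1 := by
        rw [ht, pow_succ', pow_mul, hz2, one_pow]
      have hsq : (x ^ t) ^ 2 = 1 := by rw [← pow_mul, ← hot, hx1]
      have hbu : b * x ^ t * b⁻¹ = x ^ t := by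
        have e1 : ∃ i : ℤ, b * x ^ t * b⁻¹ = (x ^ t) ^ i := by
          obtain ⟨i, hi⟩ := hMdec _ (hMN.conj_mem x hxM b)
          refine ⟨i, ?_⟩
          rw [← conj_pow]
          rcases hi with hi | hi
          · rw [hi, ← zpow_natCast, ← zpow_natCast, ← zpow_mul, ← zpow_mul, mul_comm]
          · have : Commute (x ^ i) z := hzz _
            rw [hi, this.mul_pow, hzt, mul_one, ← zpow_natCast, ← zpow_natCast, ← zpow_mul,
              ← zpow_mul, mul_comm]
        obtain ⟨i, hi⟩ := e1
        rcases Int.even_or_odd' i with ⟨l, rfl | rfl⟩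
        · exfalso
          apply hu1
          rw [zpow_mul] at hi
          norm_cast at hi
          rw [hsq, one_zpow] at hi
          exact conj_eq_one_iff.1 hi
        · rw [zpow_add, zpow_mul] at hi
          norm_cast at hi
          rw [hsq, one_zpow, one_mul, pow_one] at hi
          exact hi
      rcases fixed_two h4 M hMi hMc b hb (x ^ t) z (M.pow_mem hxM t) hzM
        (mul_inv_eq_iff_eq_mul.1 hbu) (hzz b) hu1 with h | h
      · exact hz1 h
      · exact hπu (by rw [← h, hπz])
  · refine ⟨x, ?_⟩
    have : M = Subgroup.zpowers x := by
      apply le_antisymm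
      · intro m hm
        obtain ⟨i, rfl | rfl⟩ := hMdec m hm
        · exact Subgroup.zpow_mem_zpowers x i
        · refine mul_mem (Subgroup.zpow_mem_zpowers x i) ?_
          rw [← hxz]; exact Subgroup.npow_mem_zpowers x o
      · exact (Subgroup.zpowers_le).2 hxM
    rw [← this, hMi]

lemma exists_zmod_pow {G : Type*} [Group G] (x : G) (N : ℕ) (hx : x ^ N = 1) :
    ∃ E : ZMod N → G, ∀ i : ℤ, E i = x ^ i := by
  refine ⟨fun i => (ZMod.lift N ⟨zmultiplesHom (Additive G) (Additive.ofMul x), ?_⟩ i).toMul, ?_⟩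
  · simp [← ofMul_pow, hx]
  · intro i; simp

lemma iso_dihedral {G : Type*} [Group G] (x b : G) (N : ℕ) (hx : orderOf x = N)
    (hb : b ∉ Subgroup.zpowers x) (hdec : ∀ g : G, ∃ i : ℤ, g = x ^ i ∨ g = b * x ^ i)
    (hb2 : b * b = 1) (hbx : b * x * b⁻¹ = x⁻¹) : Nonempty (G ≃* DihedralGroup N) := by
  obtain ⟨E, hE⟩ := exists_zmod_pow x N (hx ▸ pow_orderOf_eq_one x)
  have hbi : ∀ i : ℤ, x ^ i * b = b * x ^ (-i) := by
    intro i
    have : b * x ^ (-i) * b⁻¹ = x ^ i := by rw [← conj_zpow, hbx]; simp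
    rw [← this]; group
  let f : DihedralGroup N →* G := MonoidHom.mk'
    (fun g => match g with
      | DihedralGroup.r i => E i
      | DihedralGroup.sr i => b * E i) (by
      rintro (i | i) (j | j) <;> obtain ⟨i, rfl⟩ := ZMod.intCast_surjective i <;>
        obtain ⟨j, rfl⟩ := ZMod.intCast_surjective j
      · simp only [DihedralGroup.r_mul_r]; rw [← Int.cast_add, hE, hE, hE, zpow_add]
      · simp only [DihedralGroup.r_mul_sr]
        rw [← Int.cast_sub, hE, hE, hE, ← mul_assoc, hbi, mul_assoc, ← zpow_add]
        congr 2; ring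
      · simp only [DihedralGroup.sr_mul_r]
        rw [← Int.cast_add, hE, hE, hE, zpow_add, mul_assoc]
      · simp only [DihedralGroup.sr_mul_sr]
        rw [← Int.cast_sub, hE, hE, hE, mul_assoc, ← mul_assoc (x ^ i), hbi, mul_assoc,
          ← mul_assoc b, hb2, one_mul, ← zpow_add]
        congr 1; ring)
  refine ⟨(MulEquiv.ofBijective f ⟨?_, ?_⟩).symm⟩
  · rw [injective_iff_map_eq_one]
    rintro (i | i) hi <;> obtain ⟨i, rfl⟩ := ZMod.intCast_surjective i
    · change E i = 1 at hi
      rw [hE, ← orderOf_dvd_iff_zpow_eq_one, hx] at hi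
      rw [(ZMod.intCast_zmod_eq_zero_iff_dvd i N).2 hi, DihedralGroup.r_zero]
    · change b * E i = 1 at hi
      rw [hE] at hi
      exact absurd (by rw [eq_inv_of_mul_eq_one_left hi]; exact inv_mem (Subgroup.zpow_mem_zpowers x i)) hb
  · intro g
    obtain ⟨i, rfl | rfl⟩ := hdec g
    · exact ⟨DihedralGroup.r i, hE i⟩
    · exact ⟨DihedralGroup.sr i, congrArg (b * ·) (hE i)⟩

lemma iso_quaternion {G : Type*} [Group G] (x b : G) (n : ℕ) (hx : orderOf x = 2 * n)
    (hb : b ∉ Subgroup.zpowers x) (hdec : ∀ g : G, ∃ i : ℤ, g = x ^ i ∨ g = b * x ^ i)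
    (hb2 : b * b = x ^ n) (hbx : b * x * b⁻¹ = x⁻¹) : Nonempty (G ≃* QuaternionGroup n) := by
  obtain ⟨E, hE⟩ := exists_zmod_pow x (2 * n) (hx ▸ pow_orderOf_eq_one x)
  have hbi : ∀ i : ℤ, x ^ i * b = b * x ^ (-i) := by
    intro i
    have : b * x ^ (-i) * b⁻¹ = x ^ i := by rw [← conj_zpow, hbx]; simp
    rw [← this]; group
  let f : QuaternionGroup n →* G := MonoidHom.mk'
    (fun g => match g with
      | QuaternionGroup.a i => E i
      | QuaternionGroup.xa i => b * E i) (by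
      rintro (i | i) (j | j) <;> obtain ⟨i, rfl⟩ := ZMod.intCast_surjective i <;>
        obtain ⟨j, rfl⟩ := ZMod.intCast_surjective j
      · simp only [QuaternionGroup.a_mul_a]; rw [← Int.cast_add, hE, hE, hE, zpow_add]
      · simp only [QuaternionGroup.a_mul_xa]
        rw [← Int.cast_sub, hE, hE, hE, ← mul_assoc, hbi, mul_assoc, ← zpow_add]
        congr 2; ring
      · simp only [QuaternionGroup.xa_mul_a]
        rw [← Int.cast_add, hE, hE, hE, zpow_add, mul_assoc]
      · simp only [QuaternionGroup.xa_mul_xa]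
        rw [← Int.cast_natCast, ← Int.cast_add, ← Int.cast_sub, hE, hE, hE, mul_assoc,
          ← mul_assoc (x ^ i), hbi, mul_assoc,
          ← mul_assoc b, hb2, ← zpow_natCast, ← zpow_add, ← zpow_add]
        congr 1; ring)
  refine ⟨(MulEquiv.ofBijective f ⟨?_, ?_⟩).symm⟩
  · rw [injective_iff_map_eq_one]
    rintro (i | i) hi <;> obtain ⟨i, rfl⟩ := ZMod.intCast_surjective i
    · change E i = 1 at hi
      rw [hE, ← orderOf_dvd_iff_zpow_eq_one, hx] at hi
      rw [(ZMod.intCast_zmod_eq_zero_iff_dvd i (2 * n)).2 hi, QuaternionGroup.a_zero]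
    · change b * E i = 1 at hi
      rw [hE] at hi
      exact absurd (by rw [eq_inv_of_mul_eq_one_left hi]; exact inv_mem (Subgroup.zpow_mem_zpowers x i)) hb
  · intro g
    obtain ⟨i, rfl | rfl⟩ := hdec g
    · exact ⟨QuaternionGroup.a i, hE i⟩
    · exact ⟨QuaternionGroup.xa i, congrArg (b * ·) (hE i)⟩

lemma iso_semidihedral {G : Type*} [Group G] (x b : G) (m : ℕ) (hx : orderOf x = 2 ^ (m - 1))
    (hb : b ∉ Subgroup.zpowers x) (hdec : ∀ g : G, ∃ i : ℤ, g = x ^ i ∨ g = b * x ^ i)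
    (hb2 : b * b = 1) (hbx : b * x * b⁻¹ = x ^ (2 ^ (m - 2) - 1)) :
    Nonempty (G ≃* SemidihedralGroup m) := by
  have hrel : ∀ r ∈ semidihedralRels m, FreeGroup.lift ![x, b] r = 1 := by
    intro r hr
    rcases hr with rfl | rfl | rfl
    · simp [← hx, pow_orderOf_eq_one]
    · simp [sq, hb2]
    · simp [hbx]
  let f : PresentedGroup (semidihedralRels m) →* G := PresentedGroup.toGroup hrel
  let r : PresentedGroup (semidihedralRels m) := PresentedGroup.of 0
  let a : PresentedGroup (semidihedralRels m) := PresentedGroup.of 1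
  have hfr : f r = x := by simp [f, r]
  have hfa : f a = b := by simp [f, a]
  have hr1 : r ^ (2 ^ (m - 1)) = 1 :=
    (QuotientGroup.eq_one_iff _).2 (Subgroup.subset_normalClosure (by simp [semidihedralRels]))
  have ha2 : a ^ 2 = 1 :=
    (QuotientGroup.eq_one_iff _).2 (Subgroup.subset_normalClosure (by simp [semidihedralRels]))
  have har : a * r * a⁻¹ * (r ^ (2 ^ (m - 2) - 1))⁻¹ = 1 :=
    (QuotientGroup.eq_one_iff _).2 (Subgroup.subset_normalClosure (by simp [semidihedralRels]))
  have har' := mul_inv_eq_one.1 har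
  have haa : a⁻¹ = a := inv_eq_of_mul_eq_one_left (by rw [← sq, ha2])
  have hai : ∀ i : ℤ, ∃ j : ℤ, r ^ i * a = a * r ^ j := by
    intro i
    have : a * r ^ i * a⁻¹ = (r ^ (2 ^ (m - 2) - 1)) ^ i := by rw [← conj_zpow, har']
    refine ⟨(2 ^ (m - 2) - 1 : ℕ) * i, ?_⟩
    rw [zpow_mul, zpow_natCast, ← this, haa]
    simp only [← mul_assoc]
    rw [← sq, ha2, one_mul]
  have hform : ∀ g : PresentedGroup (semidihedralRels m), ∃ i : ℤ, g = r ^ i ∨ g = a * r ^ i := by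
    intro g
    have hg : g ∈ Subgroup.closure (Set.range (PresentedGroup.of (rels := semidihedralRels m))) := by
      rw [PresentedGroup.closure_range_of]; trivial
    induction hg using Subgroup.closure_induction_right with
    | one => exact ⟨0, Or.inl (by simp)⟩
    | mul_right y hy s hs ih =>
      obtain ⟨k, rfl⟩ := hs
      obtain ⟨i, hi⟩ := ih
      fin_cases k
      · refine ⟨i + 1, ?_⟩
        rcases hi with rfl | rfl
        · left; rw [zpow_add_one]; rfl
        · right; rw [zpow_add_one, ← mul_assoc]; rfl
      · obtain ⟨j, hj⟩ := hai i
        refine ⟨j, ?_⟩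
        rcases hi with rfl | rfl
        · right; exact hj
        · left
          change a * r ^ i * a = _
          rw [mul_assoc, hj, ← mul_assoc, ← sq, ha2, one_mul]
    | mul_inv_cancel y hy s hs ih =>
      obtain ⟨k, rfl⟩ := hs
      obtain ⟨i, hi⟩ := ih
      fin_cases k
      · refine ⟨i - 1, ?_⟩
        rcases hi with rfl | rfl
        · left; rw [zpow_sub_one]; rfl
        · right; rw [zpow_sub_one, ← mul_assoc]; rfl
      · obtain ⟨j, hj⟩ := hai i
        refine ⟨j, ?_⟩
        rcases hi with rfl | rfl
        · right; change r ^ i * a⁻¹ = _; rw [haa]; exact hj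
        · left
          change a * r ^ i * a⁻¹ = _
          rw [haa, mul_assoc, hj, ← mul_assoc, ← sq, ha2, one_mul]
  refine ⟨(MulEquiv.ofBijective f ⟨?_, ?_⟩).symm⟩
  · rw [injective_iff_map_eq_one]
    intro g hg
    obtain ⟨i, rfl | rfl⟩ := hform g
    · rw [map_zpow, hfr, ← orderOf_dvd_iff_zpow_eq_one, hx] at hg
      obtain ⟨c, rfl⟩ := hg
      rw [zpow_mul, zpow_natCast, hr1, one_zpow]
    · rw [map_mul, map_zpow, hfr, hfa] at hg
      exact absurd (by rw [eq_inv_of_mul_eq_one_left hg]; exact inv_mem (Subgroup.zpow_mem_zpowers x i)) hb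
  · intro g
    obtain ⟨i, rfl | rfl⟩ := hdec g
    · exact ⟨r ^ i, by rw [map_zpow, hfr]⟩
    · exact ⟨a * r ^ i, by rw [map_mul, map_zpow, hfr, hfa]⟩

/-- **Classification of finite 2-groups with abelianization of type (2,2).** Such a
group is Klein four, generalized quaternion `Q_{2^m}` (`m ≥ 3`), dihedral `D_{2^m}`
(`m ≥ 3`) or semidihedral `S_{2^m}` (`m ≥ 4`). (Here `DihedralGroup k` and
`QuaternionGroup k` have orders `2k` and `4k`.) -/
theorem classification_of_two_groups_with_abelianization_klein
    (G : Type*) [Group G] [Finite G] (hG : IsPGroup 2 G)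
    (h : Nonempty (Abelianization G ≃*
      (Multiplicative (ZMod 2) × Multiplicative (ZMod 2)))) :
    Nonempty (G ≃* (Multiplicative (ZMod 2) × Multiplicative (ZMod 2))) ∨
    (∃ m, 3 ≤ m ∧ Nonempty (G ≃* QuaternionGroup (2 ^ (m - 2)))) ∨
    (∃ m, 3 ≤ m ∧ Nonempty (G ≃* DihedralGroup (2 ^ (m - 1)))) ∨
    (∃ m, 4 ≤ m ∧ Nonempty (G ≃* SemidihedralGroup m)) := by
  obtain ⟨e⟩ := h
  have h4 : (commutator G).index = 4 := by
    change Nat.card (Abelianization G) = 4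
    rw [Nat.card_congr e.toEquiv, Nat.card_prod]
    have : Nat.card (Multiplicative (ZMod 2)) = 2 := Nat.card_zmod 2
    rw [this]
  have c1 : Nat.card (commutator G) * 4 = Nat.card G := h4 ▸ Subgroup.card_mul_index _
  by_cases hbot : commutator G = ⊥
  · left
    refine ⟨(MulEquiv.ofBijective (Abelianization.of (G := G)) ⟨?_, ?_⟩).trans e⟩
    · rw [← MonoidHom.ker_eq_bot_iff, Abelianization.ker_of, hbot]
    · exact QuotientGroup.mk_surjective
  right
  obtain ⟨x, hx⟩ := exists_cyclic_index_two _ G rfl hG h4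
  have hcx : Nat.card G = orderOf x * 2 := by
    rw [← Subgroup.card_mul_index (Subgroup.zpowers x), hx, Nat.card_zpowers]
  obtain ⟨k, hk⟩ := (IsPGroup.iff_orderOf).1 hG x
  have hcG : 1 < Nat.card (commutator G) := (Subgroup.one_lt_card_iff_ne_bot _).2 hbot
  have hk2 : 2 ≤ k := by
    by_contra hlt
    have : k = 0 ∨ k = 1 := by omega
    rcases this with rfl | rfl <;> omega
  obtain ⟨k, rfl⟩ := Nat.exists_eq_add_of_le' hk2
  set s := x ^ (2 ^ (k + 1)) with hs
  have hs1 : s ≠ 1 := pow_ne_one_of_lt_orderOf (by positivity)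
    (by rw [hk]; exact Nat.pow_lt_pow_right (by norm_num) (by omega))
  have hss : s * s = 1 := by
    rw [hs, ← pow_add, ← two_mul, ← pow_succ', ← hk, pow_orderOf_eq_one]
  obtain ⟨b, hb⟩ : ∃ b, b ∉ Subgroup.zpowers x := by
    by_contra! hall
    have : Subgroup.zpowers x = ⊤ := (Subgroup.eq_top_iff' _).2 hall
    rw [this] at hx; simp at hx
  have hMc : ∀ a ∈ Subgroup.zpowers x, ∀ b ∈ Subgroup.zpowers x, a * b = b * a := by
    rintro _ ⟨i, rfl⟩ _ ⟨j, rfl⟩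
    exact ((Commute.refl x).zpow_zpow i j).eq
  have hN : (Subgroup.zpowers x).Normal := Subgroup.normal_of_index_eq_two hx
  have hxM : x ∈ Subgroup.zpowers x := Subgroup.mem_zpowers x
  have hsM : s ∈ Subgroup.zpowers x := pow_mem hxM _
  -- `s` is the only involution of the cyclic group, hence central
  have hsx : x * s = s * x := hMc x hxM s hsM
  have hbs : ∀ b : G, b * s = s * b := by
    intro b
    apply mul_inv_eq_iff_eq_mul.1
    obtain ⟨i, hi⟩ := hN.conj_mem x hxM b
    simp only at hi
    have e1 : b * s * b⁻¹ = s ^ i := by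
      rw [hs, ← conj_pow, ← hi, ← zpow_natCast, ← zpow_natCast, ← zpow_mul, ← zpow_mul, mul_comm]
    rcases Int.even_or_odd' i with ⟨l, rfl | rfl⟩
    · exfalso
      apply hs1
      rw [zpow_mul, zpow_two, hss, one_zpow] at e1
      exact conj_eq_one_iff.1 e1
    · rw [e1, zpow_add, zpow_mul, zpow_two, hss, one_zpow, one_mul, zpow_one]
  have hfix : ∀ b, b ∉ Subgroup.zpowers x → ∀ v ∈ Subgroup.zpowers x, b * v = v * b →
      v = 1 ∨ v = s := fun b hb v hv hvb =>
    fixed_two h4 _ hx hMc b hb s v hsM hv (hbs b) hvb hs1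
  have hdec : ∀ b, b ∉ Subgroup.zpowers x → ∀ g : G, ∃ i : ℤ, g = x ^ i ∨ g = b * x ^ i := by
    intro b hb g
    by_cases hg : g ∈ Subgroup.zpowers x
    · obtain ⟨i, hi⟩ := hg
      exact ⟨i, Or.inl hi.symm⟩
    · have : b⁻¹ * g ∈ Subgroup.zpowers x := by
        rw [Subgroup.mul_mem_iff_of_index_two hx]
        simp [hg, hb]
      obtain ⟨i, hi⟩ := this
      simp only at hi
      exact ⟨i, Or.inr (by rw [hi]; group)⟩
  have hbb : b * b ∈ Subgroup.zpowers x := by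
    rw [Subgroup.mul_mem_iff_of_index_two hx]
  have hb2 := hfix b hb (b * b) hbb (by group)
  have hcx : b * x * b⁻¹ ∈ Subgroup.zpowers x := hN.conj_mem x hxM b
  have hy := hfix b hb (x * (b * x * b⁻¹)) (mul_mem hxM hcx) (by
    have e1 := hMc (b * b) hbb x hxM
    have e2 := hMc (b * x * b⁻¹) hcx x hxM
    calc b * (x * (b * x * b⁻¹)) = (b * x * b⁻¹) * ((b * b) * x) * b⁻¹ := by group
      _ = (b * x * b⁻¹) * x * b := by rw [e1]; group
      _ = _ := by rw [e2])
  rcases hy with hy | hy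
  · have hbx : b * x * b⁻¹ = x⁻¹ := (inv_eq_of_mul_eq_one_right hy).symm
    rcases hb2 with hb2 | hb2
    · right; left
      exact ⟨k + 3, by omega, iso_dihedral x b _ hk hb (hdec b hb) hb2 hbx⟩
    · left
      refine ⟨k + 3, by omega, iso_quaternion x b _ ?_ hb (hdec b hb) hb2 hbx⟩
      rw [hk]; exact pow_succ' 2 (k + 1)
  · right; right
    have hinv : x⁻¹ * s = x ^ (2 ^ (k + 1) - 1) := by
      rw [inv_mul_eq_iff_eq_mul, hs, ← pow_succ',
        Nat.sub_add_cancel (Nat.one_le_two_pow)]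
    have hbx : b * x * b⁻¹ = x ^ (2 ^ (k + 1) - 1) := by
      rw [← hinv, ← hy]; group
    have hk1 : 1 ≤ k := by
      by_contra hk0
      have : k = 0 := by omega
      subst this
      simp only [zero_add, pow_one] at hbx hs hk
      have hxb : b * x = x * b := mul_inv_eq_iff_eq_mul.1 (by simpa using hbx)
      rcases hfix b hb x hxM hxb with h1 | h1
      · rw [h1] at hk; simp at hk
      · have : x * x = 1 := by rw [h1]; exact hss
        apply hs1
        rw [hs, sq, this]
    refine ⟨k + 3, by omega, ?_⟩
    rcases hb2 with hb2 | hb2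
    · exact iso_semidihedral x b _ hk hb (hdec b hb) hb2 hbx
    · have hxb : x * b ∉ Subgroup.zpowers x := by
        rw [Subgroup.mul_mem_iff_of_index_two hx]
        simp [hb, hxM]
      refine iso_semidihedral x (x * b) _ hk hxb (hdec _ hxb) ?_ ?_
      · calc x * b * (x * b) = x * (b * x * b⁻¹) * (b * b) := by group
          _ = 1 := by rw [hy, hb2, hss]
      · calc x * b * x * (x * b)⁻¹ = x * (b * x * b⁻¹) * x⁻¹ := by group
          _ = _ := by
            rw [hy]
            exact (hbs x⁻¹).symm.trans hinv
end
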